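/- arXiv:2504.19054 — 8 statements merged into one kernel-verified Lean document; each statement's English description precedes it below -/
import Mathlib

section
/- Let n ≥ 1 and let M ∈ ℝ^{n×n} be an RDDL matrix. Then M is invertible if and only if M is connected to the dummy vertex, i.e., for every index i ∈ [n] there exists a finite sequence i = v₀, v₁, …, v_k of indices in [n] with M_{v_l, v_{l+1}} < 0 for all 0 ≤ l < k and with strictly positive row sum ∑_{j=1}^n M_{v_k, j} > 0 at the final index (the case k = 0 being allowed). -/
open Matrix

/-- A matrix `M` is an RDDL matrix (row diagonally dominant L-matrix) if its diagonal
entries are positive, its off-diagonal entries are nonpositive, and each row is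
diagonally dominant. -/
def IsRDDL {n : ℕ} (M : Matrix (Fin n) (Fin n) ℝ) : Prop :=
  (∀ i, 0 < M i i) ∧ (∀ i j, i ≠ j → M i j ≤ 0) ∧
    (∀ i, ∑ j ∈ Finset.univ.erase i, |M i j| ≤ M i i)

/-- `M` is connected to the dummy vertex: from every index `i` there is a finite
sequence `i = v₀, v₁, …, v_k` with `M (v l) (v (l+1)) < 0` for all `l < k` and with
strictly positive row sum at the final index. -/
def ConnectedToDummy {n : ℕ} (M : Matrix (Fin n) (Fin n) ℝ) : Prop :=
  ∀ i : Fin n, ∃ (k : ℕ) (v : Fin (k + 1) → Fin n), v 0 = i ∧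
    (∀ l : Fin k, M (v l.castSucc) (v l.succ) < 0) ∧
    0 < ∑ j, M (v (Fin.last k)) j

/-!
Everything rests on the identity `(M x)ᵢ = (∑ⱼ Mᵢⱼ) xᵢ + ∑ⱼ Mᵢⱼ (xⱼ - xᵢ)`.
If `M x ≥ 0` and `x` has a negative minimum, both summands vanish at every minimizer, so the row sum
there is zero and the minimum propagates along the edges `Mᵢⱼ < 0`; when a row with positive sum is
reachable this is absurd. Hence `M x ≥ 0` forces `x ≥ 0`, and `M` is injective.
Conversely, no edge leaves the set of indices from which no such row is reachable, and its row sums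
are zero. If this set is nonempty, `(M x)ᵢ ≤ 0` where `x` is minimal on it, so `M x` is never the
all-ones vector.
-/

theorem reflTransGen_iff_exists_fin {α : Type*} {r : α → α → Prop} {a b : α} :
    Relation.ReflTransGen r a b ↔ ∃ (k : ℕ) (v : Fin (k + 1) → α), v 0 = a ∧
      (∀ l : Fin k, r (v l.castSucc) (v l.succ)) ∧ v (Fin.last k) = b := by
  constructor
  · intro h
    induction h using Relation.ReflTransGen.head_induction_on with
    | refl => exact ⟨0, fun _ ↦ b, rfl, Fin.elim0, rfl⟩
    | @head a c hac _ ih =>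
      obtain ⟨k, v, rfl, hstep, hlast⟩ := ih
      exact ⟨k + 1, Fin.cons a v, rfl, Fin.cases hac hstep, hlast⟩
  · rintro ⟨k, v, rfl, hstep, rfl⟩
    have reach (l : Fin (k + 1)) : Relation.ReflTransGen r (v 0) (v l) :=
      Fin.induction .refl (fun l ih ↦ ih.tail (hstep l)) l
    exact reach (Fin.last k)

theorem mulVec_apply_eq_rowSum_mul_add {ι R : Type*} [Fintype ι] [NonUnitalNonAssocRing R]
    (M : Matrix ι ι R) (x : ι → R) (i : ι) :
    (M *ᵥ x) i = (∑ j, M i j) * x i + ∑ j, M i j * (x j - x i) := by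
  simp only [mulVec, dotProduct, mul_sub, Finset.sum_sub_distrib, Finset.sum_mul,
    add_sub_cancel]

section ReachesDummy

variable {ι R : Type*} [Fintype ι] [AddCommMonoid R] [LT R] {M : Matrix ι ι R} {i j : ι}

/-- Index `i` reaches the dummy vertex of the weighted digraph of `M`, in which `p ⟶ q` is an edge
when `M p q < 0`, and `p` has an edge to the dummy vertex when row `p` has positive sum. -/
def ReachesDummy (M : Matrix ι ι R) (i : ι) : Prop :=
  ∃ j, Relation.ReflTransGen (fun p q ↦ M p q < 0) i j ∧ 0 < ∑ q, M j q

theorem ReachesDummy.of_rowSum_pos (h : 0 < ∑ q, M i q) : ReachesDummy M i :=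
  ⟨i, .refl, h⟩

theorem ReachesDummy.head (hij : M i j < 0) (h : ReachesDummy M j) : ReachesDummy M i :=
  h.imp fun _ ⟨hpath, hpos⟩ ↦ ⟨hpath.head hij, hpos⟩

end ReachesDummy

section OrderedRing

variable {ι R : Type*} [Ring R] [LinearOrder R] [IsStrictOrderedRing R]
  {M : Matrix ι ι R} {x : ι → R} {i j : ι}

theorem mul_sub_nonpos_of_offDiag_nonpos (hoff : i ≠ j → M i j ≤ 0)
    (hmin : M i j < 0 → x i ≤ x j) : M i j * (x j - x i) ≤ 0 := by
  obtain rfl | hij := eq_or_ne i j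
  · rw [sub_self, mul_zero]
  · obtain hneg | hzero := (hoff hij).lt_or_eq
    · exact mul_nonpos_of_nonpos_of_nonneg hneg.le (sub_nonneg.2 (hmin hneg))
    · rw [hzero, zero_mul]

variable [Fintype ι]

theorem rowSum_eq_zero_and_eq_of_isMin (hoff : ∀ j, i ≠ j → M i j ≤ 0)
    (hrow : 0 ≤ ∑ j, M i j) (hmin : ∀ j, x i ≤ x j) (hneg : x i < 0) (hMx : 0 ≤ (M *ᵥ x) i) :
    ∑ j, M i j = 0 ∧ ∀ j, M i j < 0 → x j = x i := by
  have hterm : ∀ j ∈ Finset.univ, M i j * (x j - x i) ≤ 0 := fun j _ ↦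
    mul_sub_nonpos_of_offDiag_nonpos (hoff j) fun _ ↦ hmin j
  have hdiag : (∑ j, M i j) * x i ≤ 0 := mul_nonpos_of_nonneg_of_nonpos hrow hneg.le
  have hdiff : ∑ j, M i j * (x j - x i) ≤ 0 := Finset.sum_nonpos hterm
  rw [mulVec_apply_eq_rowSum_mul_add] at hMx
  have hdiag_zero := hdiag.antisymm (hMx.trans (add_le_of_nonpos_right hdiff))
  have hdiff_zero := hdiff.antisymm (hMx.trans (add_le_of_nonpos_left hdiag))
  refine ⟨(mul_eq_zero.1 hdiag_zero).resolve_right hneg.ne, fun j hij ↦ ?_⟩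
  have hterm_zero := (Finset.sum_eq_zero_iff_of_nonpos hterm).1 hdiff_zero j (Finset.mem_univ j)
  exact sub_eq_zero.1 ((mul_eq_zero.1 hterm_zero).resolve_left hij.ne)

theorem nonneg_of_mulVec_nonneg (hoff : Pairwise fun p q ↦ M p q ≤ 0)
    (hrow : ∀ i, 0 ≤ ∑ j, M i j) (hreach : ∀ i, ReachesDummy M i) (hMx : 0 ≤ M *ᵥ x) :
    0 ≤ x := by
  intro a
  have : Nonempty ι := ⟨a⟩
  obtain ⟨i, hmin⟩ := Finite.exists_min x
  refine le_trans ?_ (hmin a)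
  by_contra! hneg
  have propagate (p : ι) (hp : x p = x i) : ∑ q, M p q = 0 ∧ ∀ q, M p q < 0 → x q = x i := by
    rw [← hp] at hmin hneg ⊢
    exact rowSum_eq_zero_and_eq_of_isMin (fun _ hne ↦ hoff hne) (hrow p) hmin hneg (hMx p)
  have eq_min_of_path {j : ι} (hpath : Relation.ReflTransGen (fun p q ↦ M p q < 0) i j) :
      x j = x i := by
    induction hpath with
    | refl => rfl
    | tail _ hedge ih => exact (propagate _ ih).2 _ hedge
  obtain ⟨j, hpath, hpos⟩ := hreach i
  exact hpos.ne' (propagate j (eq_min_of_path hpath)).1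

theorem mulVec_injective_of_reachesDummy (hoff : Pairwise fun p q ↦ M p q ≤ 0)
    (hrow : ∀ i, 0 ≤ ∑ j, M i j) (hreach : ∀ i, ReachesDummy M i) :
    Function.Injective M.mulVec := by
  have le_of_mulVec_eq {x y : ι → R} (hxy : M *ᵥ x = M *ᵥ y) : x ≤ y :=
    sub_nonneg.1 <| nonneg_of_mulVec_nonneg hoff hrow hreach <| by
      rw [mulVec_sub, hxy, sub_self]
  exact fun x y hxy ↦ le_antisymm (le_of_mulVec_eq hxy) (le_of_mulVec_eq hxy.symm)

theorem exists_mulVec_nonpos_of_not_reachesDummy (hoff : Pairwise fun p q ↦ M p q ≤ 0)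
    (hrow : ∀ i, 0 ≤ ∑ j, M i j) (hi : ¬ ReachesDummy M i) (x : ι → R) :
    ∃ p, (M *ᵥ x) p ≤ 0 := by
  obtain ⟨p, hp, hmin⟩ :=
    Set.exists_min_image {p | ¬ ReachesDummy M p} x (Set.toFinite _) ⟨i, hi⟩
  have hsum : ∑ q, M p q = 0 :=
    (not_lt.1 fun h ↦ hp (.of_rowSum_pos h)).antisymm (hrow p)
  refine ⟨p, ?_⟩
  rw [mulVec_apply_eq_rowSum_mul_add, hsum, zero_mul, zero_add]
  exact Finset.sum_nonpos fun q _ ↦ mul_sub_nonpos_of_offDiag_nonpos (@hoff p q) fun hpq ↦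
    hmin q fun hq ↦ hp (hq.head hpq)

theorem reachesDummy_of_mulVec_surjective (hoff : Pairwise fun p q ↦ M p q ≤ 0)
    (hrow : ∀ i, 0 ≤ ∑ j, M i j) (hsurj : Function.Surjective M.mulVec) (i : ι) :
    ReachesDummy M i := by
  by_contra hi
  obtain ⟨x, hx⟩ := hsurj 1
  obtain ⟨p, hp⟩ := exists_mulVec_nonpos_of_not_reachesDummy hoff hrow hi x
  rw [hx] at hp
  exact hp.not_gt one_pos

end OrderedRing

theorem rddl_invertible_iff_connectedToDummy_general {ι K : Type*} [Fintype ι] [DecidableEq ι]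
    [Field K] [LinearOrder K] [IsStrictOrderedRing K] {M : Matrix ι ι K}
    (hoff : Pairwise fun i j ↦ M i j ≤ 0) (hrow : ∀ i, 0 ≤ ∑ j, M i j) :
    IsUnit M ↔ ∀ i, ReachesDummy M i :=
  ⟨fun hM ↦ reachesDummy_of_mulVec_surjective hoff hrow (mulVec_surjective_iff_isUnit.2 hM),
    fun h ↦ mulVec_injective_iff_isUnit.1 (mulVec_injective_of_reachesDummy hoff hrow h)⟩

theorem IsRDDL.rowSum_nonneg {n : ℕ} {M : Matrix (Fin n) (Fin n) ℝ} (hM : IsRDDL M) (i : Fin n) :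
    0 ≤ ∑ j, M i j := by
  obtain ⟨-, hoff, hdom⟩ := hM
  have habs : ∑ j ∈ Finset.univ.erase i, |M i j| = -∑ j ∈ Finset.univ.erase i, M i j := by
    rw [← Finset.sum_neg_distrib]
    exact Finset.sum_congr rfl fun j hj ↦ abs_of_nonpos (hoff i j (Finset.ne_of_mem_erase hj).symm)
  rw [← Finset.add_sum_erase _ _ (Finset.mem_univ i)]
  linarith [hdom i]

theorem connectedToDummy_iff_forall_reachesDummy {n : ℕ} {M : Matrix (Fin n) (Fin n) ℝ} :
    ConnectedToDummy M ↔ ∀ i, ReachesDummy M i := by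
  refine forall_congr' fun i ↦ ⟨?_, ?_⟩
  · rintro ⟨k, v, hstart, hstep, hpos⟩
    exact ⟨v (Fin.last k), reflTransGen_iff_exists_fin.2 ⟨k, v, hstart, hstep, rfl⟩, hpos⟩
  · rintro ⟨j, hpath, hpos⟩
    obtain ⟨k, v, hstart, hstep, rfl⟩ := reflTransGen_iff_exists_fin.1 hpath
    exact ⟨k, v, hstart, hstep, hpos⟩

/-- An RDDL matrix is invertible if and only if it is connected to the dummy vertex. -/
theorem rddl_invertible_iff_connectedToDummy {n : ℕ} (hn : 1 ≤ n)
    (M : Matrix (Fin n) (Fin n) ℝ) (hM : IsRDDL M) :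
    IsUnit M ↔ ConnectedToDummy M :=
  (rddl_invertible_iff_connectedToDummy_general (fun i j ↦ hM.2.1 i j) hM.rowSum_nonneg).trans
    connectedToDummy_iff_forall_reachesDummy.symm
end

section
/- Let M ∈ ℝ^{n×n} be an RDDL matrix that is connected to the dummy vertex, let D = diag(M) be the diagonal matrix with the diagonal of M, and let A = I − D^{-1}M. Then the spectral radius of A is strictly less than 1; consequently I − A is invertible and (I − A)^{-1} = ∑_{k=0}^∞ A^k, where the series converges entrywise. -/
open Matrix

/-!
A weakly chained diagonally dominant matrix is nonsingular by a maximum principle: if `M v = 0` and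
`|v i|` is maximal, dominance of row `i` forces `|v j| = |v i|` whenever `M i j ≠ 0`, so the maximum
propagates to a strictly dominant row, which is impossible unless `v = 0`. With `D` the diagonal
part of `M` and `A = 1 - D⁻¹ M`, one has `μ - A = D⁻¹ (M + (μ - 1) D)`; for `|μ| ≥ 1` the second
factor has the off-diagonal part of `M` and the larger diagonal `μ D`, so it is nonsingular too and
`μ` is not an eigenvalue. A spectral radius below `1` makes `z ↦ (1 - z A)⁻¹` holomorphic on a disc
of radius greater than `1`, and its Taylor series at `z = 1` is the Neumann series.
-/

open Finset Relation

section JacobiMatrix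

variable {ι K : Type*} [Fintype ι] [DecidableEq ι] [DivisionRing K]

/-- The iteration matrix `1 - D⁻¹ M` of the Jacobi method for `M`, with `D` the diagonal part
of `M`. -/
def jacobiMatrix (M : Matrix ι ι K) : Matrix ι ι K :=
  1 - diagonal (fun i => (M i i)⁻¹) * M

lemma jacobiMatrix_map {L : Type*} [DivisionRing L] (f : K →+* L) (M : Matrix ι ι K) :
    jacobiMatrix (M.map f) = (jacobiMatrix M).map f := by
  ext i j
  simp [jacobiMatrix, one_apply, apply_ite]

end JacobiMatrix

section WeaklyChained

variable {ι K : Type*} [Fintype ι] [DecidableEq ι] [NormedField K]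

/-- Weakly chained diagonal dominance by rows: every row is weakly diagonally dominant, and every
index leads along nonzero entries to a strictly dominant row. Loops are allowed as steps of such a
path since they do not affect reachability. -/
structure IsWeaklyChainedDiagDominant (M : Matrix ι ι K) : Prop where
  sum_le : ∀ i, ∑ j ∈ univ.erase i, ‖M i j‖ ≤ ‖M i i‖
  exists_reflTransGen : ∀ i, ∃ j, ReflTransGen (fun a b => M a b ≠ 0) i j ∧
    ∑ k ∈ univ.erase j, ‖M j k‖ < ‖M j j‖

variable {M : Matrix ι ι K}

lemma norm_diag_mul_norm_le_of_mulVec_eq_zero {v : ι → K} (hv : M *ᵥ v = 0) (i : ι) :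
    ‖M i i‖ * ‖v i‖ ≤ ∑ j ∈ univ.erase i, ‖M i j‖ * ‖v j‖ := by
  have hrow : M i i * v i + ∑ j ∈ univ.erase i, M i j * v j = 0 := by
    rw [add_sum_erase _ (fun j => M i j * v j) (mem_univ i)]
    exact congrFun hv i
  calc ‖M i i‖ * ‖v i‖ = ‖∑ j ∈ univ.erase i, M i j * v j‖ := by
        rw [← norm_mul, eq_neg_of_add_eq_zero_left hrow, norm_neg]
    _ ≤ ∑ j ∈ univ.erase i, ‖M i j‖ * ‖v j‖ := by
        simpa only [norm_mul] using norm_sum_le (univ.erase i) fun j => M i j * v j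

lemma norm_diag_le_sum_of_mulVec_eq_zero {v : ι → K} (hv : M *ᵥ v = 0) {i : ι} (hi : v i ≠ 0)
    (hmax : ∀ j, ‖v j‖ ≤ ‖v i‖) : ‖M i i‖ ≤ ∑ j ∈ univ.erase i, ‖M i j‖ := by
  refine le_of_mul_le_mul_right ?_ (norm_pos_iff.mpr hi)
  calc ‖M i i‖ * ‖v i‖ ≤ ∑ j ∈ univ.erase i, ‖M i j‖ * ‖v j‖ :=
        norm_diag_mul_norm_le_of_mulVec_eq_zero hv i
    _ ≤ (∑ j ∈ univ.erase i, ‖M i j‖) * ‖v i‖ := by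
        rw [sum_mul]
        gcongr with j
        exact hmax j

lemma norm_le_of_mulVec_eq_zero_of_ne_zero {v : ι → K} (hv : M *ᵥ v = 0) {i j : ι}
    (hdom : ∑ k ∈ univ.erase i, ‖M i k‖ ≤ ‖M i i‖) (hmax : ∀ k, ‖v k‖ ≤ ‖v i‖)
    (hij : M i j ≠ 0) : ‖v i‖ ≤ ‖v j‖ := by
  by_contra! hlt
  have hji : j ≠ i := by
    rintro rfl
    exact hlt.false
  have hstrict : ∑ k ∈ univ.erase i, ‖M i k‖ * ‖v k‖ < ∑ k ∈ univ.erase i, ‖M i k‖ * ‖v i‖ :=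
    sum_lt_sum (fun k _ => mul_le_mul_of_nonneg_left (hmax k) (norm_nonneg _))
      ⟨j, mem_erase.mpr ⟨hji, mem_univ j⟩, mul_lt_mul_of_pos_left hlt (norm_pos_iff.mpr hij)⟩
  refine lt_irrefl (‖M i i‖ * ‖v i‖) ?_
  calc ‖M i i‖ * ‖v i‖ ≤ ∑ k ∈ univ.erase i, ‖M i k‖ * ‖v k‖ :=
        norm_diag_mul_norm_le_of_mulVec_eq_zero hv i
    _ < (∑ k ∈ univ.erase i, ‖M i k‖) * ‖v i‖ := by rwa [sum_mul]
    _ ≤ ‖M i i‖ * ‖v i‖ := by gcongr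

namespace IsWeaklyChainedDiagDominant

theorem det_ne_zero (hM : IsWeaklyChainedDiagDominant M) : M.det ≠ 0 := by
  intro hdet
  obtain ⟨v, hv0, hv⟩ := exists_mulVec_eq_zero_iff.mpr hdet
  obtain ⟨m, hm⟩ := Function.ne_iff.mp hv0
  have : Nonempty ι := ⟨m⟩
  obtain ⟨a, ha⟩ := Finite.exists_max fun i => ‖v i‖
  obtain ⟨b, hab, hb⟩ := hM.exists_reflTransGen a
  have hbmax : ∀ k, ‖v k‖ ≤ ‖v b‖ := by
    clear hb
    induction hab with
    | refl => exact ha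
    | tail _ hij ih =>
      exact fun k => (ih k).trans (norm_le_of_mulVec_eq_zero_of_ne_zero hv (hM.sum_le _) ih hij)
  have hvb : v b ≠ 0 := norm_pos_iff.mp ((norm_pos_iff.mpr hm).trans_le (hbmax m))
  exact hb.not_ge (norm_diag_le_sum_of_mulVec_eq_zero hv hvb hbmax)

lemma diag_ne_zero (hM : IsWeaklyChainedDiagDominant M) (i : ι) : M i i ≠ 0 := by
  intro hi
  have hsum : ∑ j ∈ univ.erase i, ‖M i j‖ ≤ 0 := by simpa [hi] using hM.sum_le i
  refine hM.det_ne_zero (det_eq_zero_of_row_eq_zero i fun j => ?_)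
  rcases eq_or_ne j i with rfl | hji
  · exact hi
  · exact norm_le_zero_iff.mp <|
      (single_le_sum (fun k _ => norm_nonneg (M i k)) (mem_erase.mpr ⟨hji, mem_univ j⟩)).trans hsum

lemma of_norm_diag_le {N : Matrix ι ι K} (hM : IsWeaklyChainedDiagDominant M)
    (hoff : ∀ i j, j ≠ i → N i j = M i j) (hdiag : ∀ i, ‖M i i‖ ≤ ‖N i i‖) :
    IsWeaklyChainedDiagDominant N := by
  have hsum (i : ι) : ∑ j ∈ univ.erase i, ‖N i j‖ = ∑ j ∈ univ.erase i, ‖M i j‖ :=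
    sum_congr rfl fun j hj => by rw [hoff i j (ne_of_mem_erase hj)]
  have hne (i j : ι) (hij : M i j ≠ 0) : N i j ≠ 0 := by
    rcases eq_or_ne j i with rfl | hji
    · exact norm_pos_iff.mp ((norm_pos_iff.mpr hij).trans_le (hdiag j))
    · rwa [hoff i j hji]
  refine ⟨fun i => (hsum i).trans_le ((hM.sum_le i).trans (hdiag i)), fun i => ?_⟩
  obtain ⟨j, hij, hj⟩ := hM.exists_reflTransGen i
  exact ⟨j, ReflTransGen.mono hne _ _ hij, (hsum j).trans_lt (hj.trans_le (hdiag j))⟩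

lemma map_algebraMap {L : Type*} [NormedField L] [NormedAlgebra K L]
    (hM : IsWeaklyChainedDiagDominant M) :
    IsWeaklyChainedDiagDominant (M.map (algebraMap K L)) where
  sum_le := by simpa using hM.sum_le
  exists_reflTransGen := by simpa using hM.exists_reflTransGen

theorem norm_lt_one_of_mem_spectrum_jacobiMatrix (hM : IsWeaklyChainedDiagDominant M) {μ : K}
    (hμ : μ ∈ spectrum K (jacobiMatrix M)) : ‖μ‖ < 1 := by
  by_contra! hge
  let N : Matrix ι ι K := M + diagonal fun i => (μ - 1) * M i i
  have hNdiag (i : ι) : N i i = μ * M i i := by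
    simp only [N, Matrix.add_apply, diagonal_apply_eq]
    ring
  have hN : IsWeaklyChainedDiagDominant N :=
    hM.of_norm_diag_le (fun i j hji => by simp [N, hji.symm]) fun i => by
      rw [hNdiag, norm_mul]
      exact le_mul_of_one_le_left (norm_nonneg _) hge
  have hfactor : algebraMap K (Matrix ι ι K) μ - jacobiMatrix M =
      diagonal (fun i => (M i i)⁻¹) * N := by
    have hD : diagonal (fun i => (M i i)⁻¹) * diagonal (fun i => (μ - 1) * M i i) =
        algebraMap K (Matrix ι ι K) (μ - 1) := by
      rw [diagonal_mul_diagonal, algebraMap_eq_diagonal]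
      congr 1
      ext i
      simp [mul_left_comm _ (μ - 1), hM.diag_ne_zero i]
    rw [mul_add, hD, map_sub, map_one, jacobiMatrix]
    abel
  refine hμ ?_
  rw [spectrum.mem_resolventSet_iff, hfactor]
  refine IsUnit.mul ?_ ((isUnit_iff_isUnit_det N).mpr hN.det_ne_zero.isUnit)
  exact isUnit_diagonal.mpr (Pi.isUnit_iff.mpr fun i => (inv_ne_zero (hM.diag_ne_zero i)).isUnit)

end IsWeaklyChainedDiagDominant

end WeaklyChained

section NeumannSeries

theorem hasSum_pow_ringInverse_of_spectralRadius_lt_one {A : Type*} [NormedRing A]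
    [NormedAlgebra ℂ A] [CompleteSpace A] {a : A} (ha : spectralRadius ℂ a < 1) :
    HasSum (fun k => a ^ k) (Ring.inverse (1 - a)) := by
  have hinv : 1 < (spectralRadius ℂ a)⁻¹ := ENNReal.one_lt_inv.mpr ha
  obtain ⟨r, hr1, hr⟩ := ENNReal.lt_iff_exists_nnreal_btwn.mp hinv
  have hball := (spectrum.hasFPowerSeriesOnBall_inverse_one_sub_smul ℂ a).exchange_radius
    ((spectrum.differentiableOn_inverse_one_sub_smul hr).hasFPowerSeriesOnBall
      (zero_lt_one.trans (by exact_mod_cast hr1)))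
  have h1 : (1 : ℂ) ∈ Metric.eball (0 : ℂ) r := by simpa using hr1
  simpa using hball.hasSum h1

variable {ι : Type*} [Fintype ι] [DecidableEq ι]

theorem hasSum_pow_inv_one_sub_of_forall_norm_lt_one {A : Matrix ι ι ℂ}
    (hA : ∀ μ ∈ spectrum ℂ A, ‖μ‖ < 1) : HasSum (fun k => A ^ k) (1 - A)⁻¹ := by
  let : NormedRing (Matrix ι ι ℂ) := Matrix.linftyOpNormedRing
  let : NormedAlgebra ℂ (Matrix ι ι ℂ) := Matrix.linftyOpNormedAlgebra
  rw [nonsing_inv_eq_ringInverse]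
  refine hasSum_pow_ringInverse_of_spectralRadius_lt_one ?_
  rcases subsingleton_or_nontrivial (Matrix ι ι ℂ) with hsub | hnon
  · simp
  · exact mod_cast spectrum.spectralRadius_lt_of_forall_lt A (r := 1) hA

theorem hasSum_pow_inv_one_sub_of_map_algebraMap {𝕜 L : Type*} [NormedField 𝕜] [NormedField L]
    [NormedAlgebra 𝕜 L] {A : Matrix ι ι 𝕜} (hA : IsUnit (1 - A))
    (hsum : HasSum (fun k => A.map (algebraMap 𝕜 L) ^ k) (1 - A.map (algebraMap 𝕜 L))⁻¹) :
    HasSum (fun k => A ^ k) (1 - A)⁻¹ := by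
  have hpow (k : ℕ) : A.map (algebraMap 𝕜 L) ^ k = (A ^ k).map (algebraMap 𝕜 L) :=
    (map_pow (algebraMap 𝕜 L).mapMatrix A k).symm
  have hinv : (1 - A.map (algebraMap 𝕜 L))⁻¹ = (1 - A)⁻¹.map (algebraMap 𝕜 L) := by
    refine inv_eq_right_inv ?_
    simpa only [map_mul, map_sub, map_one, RingHom.mapMatrix_apply] using
      congrArg (algebraMap 𝕜 L).mapMatrix
        (mul_nonsing_inv (1 - A) ((isUnit_iff_isUnit_det _).mp hA))
  simp only [hpow, hinv] at hsum
  refine Pi.hasSum.mpr fun i => Pi.hasSum.mpr fun j => ?_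
  exact ((algebraMap_isometry 𝕜 L).isUniformInducing.isInducing.hasSum_iff _ _).mp
    (Pi.hasSum.mp (Pi.hasSum.mp hsum i) j)

end NeumannSeries

lemma reflTransGen_of_forall_castSucc_succ {α : Type*} {r : α → α → Prop} {k : ℕ}
    {v : Fin (k + 1) → α} (hv : ∀ l : Fin k, r (v l.castSucc) (v l.succ)) (l : Fin (k + 1)) :
    ReflTransGen r (v 0) (v l) := by
  induction l using Fin.induction with
  | zero => exact .refl
  | succ l ih => exact ih.tail (hv l)

lemma sum_erase_norm_of_offDiag_nonpos {ι : Type*} [Fintype ι] [DecidableEq ι]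
    {M : Matrix ι ι ℝ} {i : ι} (hM : ∀ j, i ≠ j → M i j ≤ 0) :
    ∑ j ∈ univ.erase i, ‖M i j‖ = M i i - ∑ j, M i j := by
  rw [← add_sum_erase _ _ (mem_univ i), sub_add_cancel_left, ← sum_neg_distrib]
  exact sum_congr rfl fun j hj => Real.norm_of_nonpos (hM j (ne_of_mem_erase hj).symm)

theorem IsRDDL.isWeaklyChainedDiagDominant {n : ℕ} {M : Matrix (Fin n) (Fin n) ℝ} (hM : IsRDDL M)
    (hconn : ConnectedToDummy M) : IsWeaklyChainedDiagDominant M := by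
  obtain ⟨hpos, hoff, hdom⟩ := hM
  have hdiag (i : Fin n) : ‖M i i‖ = M i i := Real.norm_of_nonneg (hpos i).le
  refine ⟨fun i => (hdom i).trans_eq (hdiag i).symm, fun i => ?_⟩
  obtain ⟨k, v, rfl, hv, hlast⟩ := hconn i
  refine ⟨v (Fin.last k), reflTransGen_of_forall_castSucc_succ (fun l => (hv l).ne) _, ?_⟩
  rw [sum_erase_norm_of_offDiag_nonpos (hoff _), hdiag]
  exact sub_lt_self _ hlast

theorem spectralRadius_lt_one_of_connectedToDummy_general {ι 𝕜 : Type*} [Fintype ι]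
    [DecidableEq ι] [NormedField 𝕜] [NormedAlgebra 𝕜 ℂ] {M : Matrix ι ι 𝕜}
    (hM : IsWeaklyChainedDiagDominant M) :
    (∀ μ ∈ spectrum ℂ ((jacobiMatrix M).map (algebraMap 𝕜 ℂ)), ‖μ‖ < 1) ∧
      IsUnit (1 - jacobiMatrix M) ∧
      HasSum (fun k => jacobiMatrix M ^ k) (1 - jacobiMatrix M)⁻¹ := by
  have hspec : ∀ μ ∈ spectrum ℂ ((jacobiMatrix M).map (algebraMap 𝕜 ℂ)), ‖μ‖ < 1 := by
    rw [← jacobiMatrix_map]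
    exact fun μ => hM.map_algebraMap.norm_lt_one_of_mem_spectrum_jacobiMatrix
  have hunit : IsUnit (1 - jacobiMatrix M) := by
    by_contra h
    have h1 : (1 : 𝕜) ∈ spectrum 𝕜 (jacobiMatrix M) := by rwa [spectrum.mem_iff, map_one]
    exact (hM.norm_lt_one_of_mem_spectrum_jacobiMatrix h1).ne norm_one
  exact ⟨hspec, hunit, hasSum_pow_inv_one_sub_of_map_algebraMap hunit
    (hasSum_pow_inv_one_sub_of_forall_norm_lt_one hspec)⟩

/-- For an RDDL matrix `M` connected to the dummy vertex, letting `D = diag M` and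
`A = 1 - D⁻¹ * M`, the spectral radius of `A` is less than one (every complex eigenvalue
of `A` has modulus `< 1`); consequently `I - A` is invertible and
`(I - A)⁻¹ = ∑ₖ A^k` entrywise. -/
theorem spectralRadius_lt_one_of_connectedToDummy {n : ℕ}
    (M : Matrix (Fin n) (Fin n) ℝ) (hM : IsRDDL M) (hconn : ConnectedToDummy M)
    (A : Matrix (Fin n) (Fin n) ℝ)
    (hA : A = 1 - (Matrix.diagonal fun i => (M i i)⁻¹) * M) :
    (∀ μ : ℂ, μ ∈ spectrum ℂ (A.map Complex.ofReal) → ‖μ‖ < 1) ∧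
    IsUnit (1 - A) ∧
    (∀ i j, Filter.Tendsto (fun N => ∑ k ∈ Finset.range N, (A ^ k) i j)
      Filter.atTop (nhds ((1 - A)⁻¹ i j))) := by
  subst hA
  obtain ⟨hspec, hunit, hsum⟩ :=
    spectralRadius_lt_one_of_connectedToDummy_general (hM.isWeaklyChainedDiagDominant hconn)
  exact ⟨hspec, hunit, fun i j => (Pi.hasSum.mp (Pi.hasSum.mp hsum i) j).tendsto_sum_nat⟩
end

section
/- Let L be an n×n invertible SDDM matrix all of whose entries are integers in [−U, U] for some U ≥ 1. Then the ℓ₂ operator norm of L^{-1} satisfies ‖L^{-1}‖₂ = 1/λ_min(L) ≤ n², where λ_min(L) denotes the smallest eigenvalue of L. -/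
open Matrix

/-!
Write the quadratic form of `L` as `∑ᵢ sᵢ xᵢ² + ½ ∑ᵢⱼ (-Lᵢⱼ) (xᵢ - xⱼ)²`, where `sᵢ ≥ 0` are the row
sums; by integrality each `sᵢ` and each weight `-Lᵢⱼ` is zero or at least `1`. If all `sᵢ` vanished
on a connected component of the support graph, the indicator of that component would be in the
kernel, so from every `u` some path leads to a `k` with `s_k ≥ 1`. Cauchy–Schwarz along this path,
applied to `x_u = x_k + ∑ (differences)`, gives `x_u² ≤ n · xᵀLx`. Summing over `u` yields
`|x|² ≤ n² · xᵀLx`, that is, `λ_min ≥ 1 / n²`.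
-/

section SpectralNorm

variable {𝕜 ι : Type*} [RCLike 𝕜] [Fintype ι] [DecidableEq ι]

open scoped Matrix.Norms.L2Operator in
theorem isGreatest_norm_toEuclideanCLM_inv [Nonempty ι] {A : Matrix ι ι 𝕜} (hA : A.IsHermitian)
    (hunit : IsUnit A) :
    IsGreatest (Set.range fun i ↦ |hA.eigenvalues i|⁻¹) ‖toEuclideanCLM (𝕜 := 𝕜) A⁻¹‖ := by
  -- The library has this normed algebra structure only over `𝕜`; the spectrum here is over `ℝ`.
  let : NormedAlgebra ℝ (Matrix ι ι 𝕜) :=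
    { norm_smul_le := fun r B ↦ by
        simpa only [RCLike.norm_ofReal, ← RCLike.real_smul_eq_coe_smul] using!
          norm_smul_le (r : 𝕜) B }
  have hspec : spectrum ℝ A⁻¹ = (Set.range hA.eigenvalues)⁻¹ := by
    lift A to (Matrix ι ι 𝕜)ˣ using hunit
    rw [← coe_units_inv, ← spectrum.map_inv, hA.spectrum_real_eq_range_eigenvalues]
  have h := IsometricContinuousFunctionalCalculus.isGreatest_norm_spectrum (𝕜 := ℝ) A⁻¹ hA.inv
  rw [hspec, ← Set.image_inv_eq_inv, ← Set.range_comp, ← Set.range_comp] at h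
  simpa only [Function.comp_def, norm_inv, Real.norm_eq_abs, abs_inv,
    l2_opNorm_toEuclideanCLM] using h

open scoped ComplexOrder in
theorem norm_toEuclideanCLM_inv_of_posDef [Nonempty ι] {A : Matrix ι ι 𝕜} (hA : A.PosDef) :
    ‖toEuclideanCLM (𝕜 := 𝕜) A⁻¹‖ = 1 / ⨅ i, hA.1.eigenvalues i := by
  obtain ⟨i₀, hmin⟩ := exists_eq_ciInf_of_finite (f := hA.1.eigenvalues)
  rw [← hmin, one_div]
  refine (isGreatest_norm_toEuclideanCLM_inv hA.1 hA.isUnit).unique ⟨⟨i₀, ?_⟩, ?_⟩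
  · exact congrArg _ (abs_of_pos (hA.eigenvalues_pos i₀))
  · rintro _ ⟨i, rfl⟩
    beta_reduce
    rw [abs_of_pos (hA.eigenvalues_pos i)]
    exact inv_anti₀ (hA.eigenvalues_pos i₀) (hmin ▸ ciInf_le (Set.finite_range _).bddBelow i)

theorem le_eigenvalues_of_forall_le_dotProduct_mulVec {A : Matrix ι ι ℝ} (hA : A.IsHermitian)
    {c : ℝ} (hc : ∀ x : ι → ℝ, c * (x ⬝ᵥ x) ≤ x ⬝ᵥ A *ᵥ x) (i : ι) : c ≤ hA.eigenvalues i := by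
  have hone : (hA.eigenvectorBasis i : ι → ℝ) ⬝ᵥ hA.eigenvectorBasis i = 1 := by
    rw [← inner_self_eq_one_of_norm_eq_one (𝕜 := ℝ) (hA.eigenvectorBasis.norm_eq_one i)]
    rfl
  simpa [hA.eigenvalues_eq, hone] using hc (hA.eigenvectorBasis i)

end SpectralNorm

section Walks

variable {V : Type*} {G : SimpleGraph V} {u v : V}

theorem sq_le_length_add_one_mul_sum_darts {R : Type*} [CommRing R] [LinearOrder R]
    [IsStrictOrderedRing R] (p : G.Walk u v) (x : V → R) :
    x u ^ 2 ≤ (p.length + 1) * (x v ^ 2 + (p.darts.map fun d ↦ (x d.fst - x d.snd) ^ 2).sum) := by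
  induction p with
  | nil => simp
  | @cons u w v _ p ih =>
    simp only [SimpleGraph.Walk.length_cons, SimpleGraph.Walk.darts_cons, List.map_cons,
      List.sum_cons, Nat.cast_add, Nat.cast_one, add_left_comm (x v ^ 2)]
    set ℓ : R := p.length + 1
    set F := x v ^ 2 + (p.darts.map fun d ↦ (x d.fst - x d.snd) ^ 2).sum
    have hℓ : 0 < ℓ := by positivity
    refine le_of_mul_le_mul_left ?_ hℓ
    calc ℓ * x u ^ 2 ≤ ℓ * x u ^ 2 + (x w - ℓ * (x u - x w)) ^ 2 :=
          le_add_of_nonneg_right (sq_nonneg _)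
      _ = (ℓ + 1) * (x w ^ 2 + ℓ * (x u - x w) ^ 2) := by ring
      _ ≤ (ℓ + 1) * (ℓ * F + ℓ * (x u - x w) ^ 2) := by gcongr
      _ = ℓ * ((ℓ + 1) * ((x u - x w) ^ 2 + F)) := by ring

theorem sum_darts_add_swap_le_of_isTrail [Fintype V] {M : Type*} [AddCommMonoid M] [PartialOrder M]
    [IsOrderedAddMonoid M] {p : G.Walk u v} (hp : p.IsTrail) {f : V → V → M}
    (hf : ∀ i j, 0 ≤ f i j) :
    (p.darts.map fun d ↦ f d.fst d.snd + f d.snd d.fst).sum ≤ ∑ i, ∑ j, f i j := by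
  classical
  have hdarts : p.darts.Nodup := hp.edges_nodup.of_map _
  have hdisj : p.darts.Disjoint (p.darts.map SimpleGraph.Dart.symm) := by
    simp only [List.disjoint_left, List.mem_map, not_exists, not_and]
    rintro d hd d' hd' rfl
    exact d'.symm_ne (List.inj_on_of_nodup_map hp.edges_nodup hd hd' d'.edge_symm)
  have hnodup : (p.darts ++ p.darts.map SimpleGraph.Dart.symm).Nodup :=
    hdarts.append (hdarts.map SimpleGraph.Dart.symm_involutive.injective) hdisj
  have hpairs := hnodup.map (SimpleGraph.Dart.toProd_injective (G := G))
  calc (p.darts.map fun d ↦ f d.fst d.snd + f d.snd d.fst).sum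
      = ∑ q ∈ ((p.darts ++ p.darts.map SimpleGraph.Dart.symm).map
          SimpleGraph.Dart.toProd).toFinset, f q.1 q.2 := by
        rw [List.sum_toFinset _ hpairs, List.sum_map_add]
        simp [Function.comp_def]
    _ ≤ ∑ q : V × V, f q.1 q.2 := Finset.sum_le_univ_sum_of_nonneg fun q ↦ hf q.1 q.2
    _ = ∑ i, ∑ j, f i j := Fintype.sum_prod_type' f

end Walks

section SupportGraph

variable {ι R : Type*}

/-- The graph of the nonzero off-diagonal entries of a square matrix, read in both directions so
that no symmetry is required. -/
def supportGraph [Zero R] (L : Matrix ι ι R) : SimpleGraph ι :=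
  .fromRel fun i j ↦ L i j ≠ 0

theorem mulVec_apply_of_forall_ne_zero_imp_eq [Fintype ι] [NonUnitalNonAssocSemiring R]
    {L : Matrix ι ι R} {c : ι → R} (hc : ∀ i j, L i j ≠ 0 → c i = c j) (i : ι) :
    (L *ᵥ c) i = (∑ j, L i j) * c i := by
  rw [Finset.sum_mul]
  refine Finset.sum_congr rfl fun j _ ↦ ?_
  by_cases h : L i j = 0
  · simp [h]
  · rw [hc i j h]

theorem supportGraph_reachable_of_ne_zero [Zero R] {L : Matrix ι ι R} {i j : ι} (h : L i j ≠ 0) :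
    (supportGraph L).Reachable i j := by
  by_cases hij : i = j
  · exact hij ▸ .refl i
  · exact SimpleGraph.Adj.reachable ⟨hij, .inl h⟩

theorem exists_reachable_sum_row_ne_zero [Fintype ι] [DecidableEq ι] [Semiring R] [Nontrivial R]
    {L : Matrix ι ι R} (hL : IsUnit L) (u : ι) :
    ∃ k, (supportGraph L).Reachable u k ∧ ∑ j, L k j ≠ 0 := by
  classical
  by_contra! hzero
  let c : ι → R := fun i ↦ if (supportGraph L).Reachable u i then 1 else 0
  have hc : ∀ i j, L i j ≠ 0 → c i = c j := fun i j h ↦ by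
    have hij := supportGraph_reachable_of_ne_zero h
    have : (supportGraph L).Reachable u i ↔ (supportGraph L).Reachable u j :=
      ⟨fun hu ↦ hu.trans hij, fun hu ↦ hu.trans hij.symm⟩
    simp only [c, this]
  have hker : L *ᵥ c = L *ᵥ 0 := by
    ext i
    rw [mulVec_apply_of_forall_ne_zero_imp_eq hc, mulVec_zero, Pi.zero_apply]
    by_cases hi : (supportGraph L).Reachable u i
    · rw [hzero i hi, zero_mul]
    · simp [c, hi]
  have hcu : c u = 0 := congrFun (mulVec_injective_of_isUnit hL hker) u
  simp [c] at hcu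

end SupportGraph

section DirichletEnergy

variable {ι K : Type*} [Fintype ι] [Field K]

/-- The Dirichlet energy of `x` for the edge weights `-L i j`. Every edge is met in both
directions by the double sum, hence the factor `1 / 2`. -/
def dirichletEnergy (L : Matrix ι ι K) (x : ι → K) : K :=
  (∑ i, ∑ j, -L i j * (x i - x j) ^ 2) / 2

theorem dotProduct_mulVec_eq_add_dirichletEnergy [NeZero (2 : K)] {L : Matrix ι ι K}
    (hL : L.IsSymm) (x : ι → K) :
    x ⬝ᵥ L *ᵥ x = ∑ i, (∑ j, L i j) * x i ^ 2 + dirichletEnergy L x := by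
  have hswap : ∑ i, ∑ j, L i j * x j ^ 2 = ∑ i, ∑ j, L i j * x i ^ 2 := by
    rw [Finset.sum_comm]
    simp only [hL.apply]
  have hexpand : ∑ i, ∑ j, -L i j * (x i - x j) ^ 2 =
      2 * (x ⬝ᵥ L *ᵥ x) - ∑ i, ∑ j, L i j * x i ^ 2 - ∑ i, ∑ j, L i j * x j ^ 2 := by
    simp only [dotProduct, mulVec, Finset.mul_sum, ← Finset.sum_sub_distrib]
    refine Finset.sum_congr rfl fun i _ ↦ Finset.sum_congr rfl fun j _ ↦ ?_
    ring
  rw [dirichletEnergy, hexpand, hswap]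
  simp only [Finset.sum_mul]
  field_simp
  ring

end DirichletEnergy

/-- Every edge weight `-L i j` and every row sum of `L` is zero or at least `δ`. For symmetric `L`
and `0 < δ` this says that `L` is a graph Laplacian plus a nonnegative diagonal potential, the row
sums, with weights and potential bounded away from zero on their supports. The diagonal dominance
of an RDDL matrix is the nonnegativity of the row sums, and its integrality gives `δ = 1`. -/
structure HasLaplacianGap {ι K : Type*} [Fintype ι] [AddCommGroup K] [LE K]
    (L : Matrix ι ι K) (δ : K) : Prop where
  le_neg_of_ne_zero : ∀ ⦃i j⦄, i ≠ j → L i j ≠ 0 → L i j ≤ -δ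
  le_sum_row_of_ne_zero : ∀ ⦃i⦄, ∑ j, L i j ≠ 0 → δ ≤ ∑ j, L i j

namespace HasLaplacianGap

variable {ι : Type*} [Fintype ι]

theorem sum_row_nonneg {M : Type*} [AddCommGroup M] [LinearOrder M] {L : Matrix ι ι M} {δ : M}
    (h : HasLaplacianGap L δ) (hδ : 0 ≤ δ) (i : ι) : 0 ≤ ∑ j, L i j := by
  by_contra! hneg
  exact hneg.not_ge (hδ.trans (h.le_sum_row_of_ne_zero hneg.ne))

section OrderedRing

variable {R : Type*} [CommRing R] [LinearOrder R] [IsStrictOrderedRing R] {L : Matrix ι ι R} {δ : R}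

theorem neg_mul_sq_sub_nonneg (h : HasLaplacianGap L δ) (hδ : 0 ≤ δ) (x : ι → R) (i j : ι) :
    0 ≤ -L i j * (x i - x j) ^ 2 := by
  rcases eq_or_ne i j with rfl | hij
  · simp
  rcases eq_or_ne (L i j) 0 with hzero | hne
  · simp [hzero]
  · have := h.le_neg_of_ne_zero hij hne
    exact mul_nonneg (by linarith) (sq_nonneg _)

theorem mul_sq_le_sum_row_mul_sq (h : HasLaplacianGap L δ) (hδ : 0 ≤ δ) (x : ι → R) {k : ι}
    (hk : ∑ j, L k j ≠ 0) : δ * x k ^ 2 ≤ ∑ i, (∑ j, L i j) * x i ^ 2 :=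
  calc δ * x k ^ 2 ≤ (∑ j, L k j) * x k ^ 2 := by gcongr; exact h.le_sum_row_of_ne_zero hk
    _ ≤ ∑ i, (∑ j, L i j) * x i ^ 2 :=
      Finset.single_le_sum (f := fun i ↦ (∑ j, L i j) * x i ^ 2)
        (fun i _ ↦ mul_nonneg (h.sum_row_nonneg hδ i) (sq_nonneg _)) (Finset.mem_univ k)

end OrderedRing

variable {K : Type*} [Field K] [LinearOrder K] [IsStrictOrderedRing K] {L : Matrix ι ι K} {δ : K}

theorem mul_sum_darts_le_dirichletEnergy (h : HasLaplacianGap L δ) (hδ : 0 ≤ δ) (hL : L.IsSymm)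
    (x : ι → K) {u v : ι} {p : (supportGraph L).Walk u v} (hp : p.IsTrail) :
    δ * (p.darts.map fun d ↦ (x d.fst - x d.snd) ^ 2).sum ≤ dirichletEnergy L x := by
  let f : ι → ι → K := fun i j ↦ -L i j * (x i - x j) ^ 2
  have hdart : ∀ d : (supportGraph L).Dart,
      2 * δ * (x d.fst - x d.snd) ^ 2 ≤ f d.fst d.snd + f d.snd d.fst := fun d ↦ by
    obtain ⟨hne, hadj⟩ := d.adj
    have hsymm : L d.snd d.fst = L d.fst d.snd := hL.apply _ _
    have hle := h.le_neg_of_ne_zero hne (hadj.elim id (hsymm ▸ ·))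
    simp only [f, hsymm]
    nlinarith [mul_le_mul_of_nonneg_right hle (sq_nonneg (x d.fst - x d.snd))]
  rw [dirichletEnergy, le_div_iff₀' two_pos, ← mul_assoc, ← List.sum_map_mul_left]
  exact (List.sum_le_sum fun d _ ↦ hdart d).trans
    (sum_darts_add_swap_le_of_isTrail hp (h.neg_mul_sq_sub_nonneg hδ x))

variable [DecidableEq ι]

theorem mul_sq_le_card_mul_dotProduct_mulVec (h : HasLaplacianGap L δ) (hδ : 0 ≤ δ)
    (hL : L.IsSymm) (hunit : IsUnit L) (x : ι → K) (u : ι) :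
    δ * x u ^ 2 ≤ Fintype.card ι * (x ⬝ᵥ L *ᵥ x) := by
  obtain ⟨k, hreach, hk⟩ := exists_reachable_sum_row_ne_zero hunit u
  obtain ⟨p, hp⟩ := hreach.exists_isPath
  set S := (p.darts.map fun d ↦ (x d.fst - x d.snd) ^ 2).sum
  have hS : 0 ≤ S := List.sum_nonneg (List.forall_mem_map.2 fun _ _ ↦ sq_nonneg _)
  have hlength : (p.length + 1 : K) ≤ Fintype.card ι := mod_cast hp.length_lt
  calc δ * x u ^ 2 ≤ δ * ((p.length + 1) * (x k ^ 2 + S)) := by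
        gcongr; exact sq_le_length_add_one_mul_sum_darts p x
    _ = (p.length + 1) * (δ * x k ^ 2 + δ * S) := by ring
    _ ≤ Fintype.card ι * (∑ i, (∑ j, L i j) * x i ^ 2 + dirichletEnergy L x) := by
        gcongr
        · exact h.mul_sq_le_sum_row_mul_sq hδ x hk
        · exact h.mul_sum_darts_le_dirichletEnergy hδ hL x hp.isTrail
    _ = Fintype.card ι * (x ⬝ᵥ L *ᵥ x) := by rw [dotProduct_mulVec_eq_add_dirichletEnergy hL]

theorem mul_dotProduct_self_le_card_sq_mul_dotProduct_mulVec (h : HasLaplacianGap L δ)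
    (hδ : 0 ≤ δ) (hL : L.IsSymm) (hunit : IsUnit L) (x : ι → K) :
    δ * (x ⬝ᵥ x) ≤ Fintype.card ι ^ 2 * (x ⬝ᵥ L *ᵥ x) :=
  calc δ * (x ⬝ᵥ x) = ∑ u, δ * x u ^ 2 := by simp only [dotProduct, Finset.mul_sum, sq]
    _ ≤ ∑ _u : ι, Fintype.card ι * (x ⬝ᵥ L *ᵥ x) :=
      Finset.sum_le_sum fun u _ ↦ h.mul_sq_le_card_mul_dotProduct_mulVec hδ hL hunit x u
    _ = Fintype.card ι ^ 2 * (x ⬝ᵥ L *ᵥ x) := by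
      rw [Finset.sum_const, Finset.card_univ, nsmul_eq_mul]; ring

theorem div_card_sq_le_eigenvalues {L : Matrix ι ι ℝ} {δ : ℝ} (h : HasLaplacianGap L δ)
    (hδ : 0 ≤ δ) (hL : L.IsHermitian) (hunit : IsUnit L) (i : ι) :
    δ / Fintype.card ι ^ 2 ≤ hL.eigenvalues i := by
  have hcard : (0 : ℝ) < Fintype.card ι ^ 2 := by
    have := Fintype.card_pos_iff.2 ⟨i⟩
    positivity
  refine le_eigenvalues_of_forall_le_dotProduct_mulVec hL (fun x ↦ ?_) i
  rw [div_mul_eq_mul_div, div_le_iff₀' hcard]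
  exact h.mul_dotProduct_self_le_card_sq_mul_dotProduct_mulVec hδ
    (isHermitian_iff_isSymm.1 hL) hunit x

end HasLaplacianGap

namespace IsRDDL

variable {n : ℕ} {L : Matrix (Fin n) (Fin n) ℝ}

theorem sum_row_nonneg (hL : IsRDDL L) (i : Fin n) : 0 ≤ ∑ j, L i j := by
  obtain ⟨-, -, hdom⟩ := hL
  rw [← Finset.add_sum_erase _ _ (Finset.mem_univ i)]
  have := (abs_le.1 (Finset.abs_sum_le_sum_abs (L i) (Finset.univ.erase i))).1
  linarith [hdom i]

theorem hasLaplacianGap_one (hL : IsRDDL L) (hint : ∀ i j, ∃ z : ℤ, L i j = z) :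
    HasLaplacianGap L 1 where
  le_neg_of_ne_zero i j hij h0 := by
    have hneg := lt_of_le_of_ne (hL.2.1 i j hij) h0
    obtain ⟨z, hz⟩ := hint i j
    rw [hz] at hneg ⊢
    exact_mod_cast Int.le_sub_one_of_lt (Int.cast_lt_zero.1 hneg)
  le_sum_row_of_ne_zero i h0 := by
    have hpos := lt_of_le_of_ne (hL.sum_row_nonneg i) h0.symm
    choose z hz using hint i
    simp only [hz] at hpos ⊢
    exact_mod_cast hpos

end IsRDDL

theorem sddm_inverse_opNorm_bound_general {ι : Type*} [Fintype ι] [DecidableEq ι] [Nonempty ι]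
    {δ : ℝ} (hδ : 0 < δ) {L : Matrix ι ι ℝ} (hgap : HasLaplacianGap L δ) (hL : L.IsHermitian)
    (hunit : IsUnit L) :
    ‖toEuclideanCLM (𝕜 := ℝ) L⁻¹‖ = 1 / (⨅ i, hL.eigenvalues i) ∧
    ‖toEuclideanCLM (𝕜 := ℝ) L⁻¹‖ ≤ (Fintype.card ι : ℝ) ^ 2 / δ := by
  have hcard : (0 : ℝ) < Fintype.card ι ^ 2 := by positivity
  have hlow := hgap.div_card_sq_le_eigenvalues hδ.le hL hunit
  have hpos : L.PosDef :=
    hL.posDef_iff_eigenvalues_pos.2 fun i ↦ (div_pos hδ hcard).trans_le (hlow i)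
  have hnorm := norm_toEuclideanCLM_inv_of_posDef hpos
  refine ⟨hnorm, ?_⟩
  rw [hnorm, ← one_div_div δ]
  exact one_div_le_one_div_of_le (div_pos hδ hcard) (le_ciInf hlow)

/-- For an `n × n` invertible SDDM matrix `L` (symmetric invertible RDDL) with integer
entries in `[-U, U]`, the ℓ₂ operator norm of `L⁻¹` equals `1 / λ_min L` and is at most `n²`. -/
theorem sddm_inverse_opNorm_bound {n : ℕ} (hn : 0 < n) (U : ℕ) (hU : 1 ≤ U)
    (L : Matrix (Fin n) (Fin n) ℝ) (hL : IsRDDL L) (hLsym : L.IsHermitian)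
    (hInv : IsUnit L)
    (hint : ∀ i j, ∃ z : ℤ, L i j = (z : ℝ) ∧ |z| ≤ (U : ℤ)) :
    ‖Matrix.toEuclideanCLM (𝕜 := ℝ) L⁻¹‖ = 1 / (⨅ i, hLsym.eigenvalues i) ∧
    ‖Matrix.toEuclideanCLM (𝕜 := ℝ) L⁻¹‖ ≤ (n : ℝ) ^ 2 := by
  have : Nonempty (Fin n) := ⟨⟨0, hn⟩⟩
  simpa using sddm_inverse_opNorm_bound_general one_pos
    (hL.hasLaplacianGap_one fun i j ↦ (hint i j).imp fun _ ↦ And.left) hLsym hInv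
end

section
/- Let M ∈ ℝ^{n×n} be an invertible RDDL matrix and let t ∈ [n]. Let M^{(t)} be the matrix obtained from M by zeroing out row t except for the diagonal entry, i.e., M^{(t)}_{tj} = 0 for j ≠ t, M^{(t)}_{tt} = M_{tt}, and M^{(t)}_{ij} = M_{ij} for i ≠ t. Then (M^{-1})_{tt} > 0, the matrix M^{(t)} is invertible, and for every s ∈ [n] one has ((M^{(t)})^{-1})_{st} = (M^{-1})_{st} / (M_{tt} · (M^{-1})_{tt}). -/
open Matrix

/-! For a Z-matrix with nonnegative row sums, suppose `A *ᵥ x ≥ 0` and `x` has a negative minimum.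
The rows of `A` at the minimizers then have zero sum and are supported on the minimizers, so the
corresponding diagonal block kills the constant vector and `A` is singular. Hence an invertible `A`
has `A⁻¹ ≥ 0`, and row `t` of `A * A⁻¹ = 1` forces `A⁻¹ t t > 0`. Replacing row `t` of `A` leaves
column `t` of the adjugate unchanged, so column `t` of the inverse is only rescaled. -/

section UpdateRow

variable {ι : Type*} [Fintype ι] [DecidableEq ι]

theorem adjugate_updateRow_apply_self {R : Type*} [CommRing R] (A : Matrix ι ι R) (i : ι)
    (v : ι → R) (s : ι) : (A.updateRow i v).adjugate s i = A.adjugate s i := by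
  rw [adjugate_apply, adjugate_apply, updateRow_idem]

theorem det_updateRow_eq_vecMul_adjugate {R : Type*} [CommRing R] (A : Matrix ι ι R) (i : ι)
    (v : ι → R) : (A.updateRow i v).det = (v ᵥ* A.adjugate) i := by
  rw [← cramer_transpose_apply, cramer_eq_adjugate_mulVec, ← adjugate_transpose, mulVec_transpose]

theorem det_updateRow_eq_det_mul_vecMul_inv {R : Type*} [CommRing R] {A : Matrix ι ι R}
    (hA : IsUnit A) (i : ι) (v : ι → R) :
    (A.updateRow i v).det = A.det * (v ᵥ* A⁻¹) i := by
  have adjugate_eq : A.adjugate = A.det • A⁻¹ := by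
    rw [inv_def, smul_smul, Ring.mul_inverse_cancel _ ((isUnit_iff_isUnit_det A).mp hA), one_smul]
  rw [det_updateRow_eq_vecMul_adjugate, adjugate_eq, vecMul_smul, Pi.smul_apply, smul_eq_mul]

theorem isUnit_updateRow_iff {R : Type*} [CommRing R] {A : Matrix ι ι R} (hA : IsUnit A) (i : ι)
    (v : ι → R) : IsUnit (A.updateRow i v) ↔ IsUnit ((v ᵥ* A⁻¹) i) := by
  rw [isUnit_iff_isUnit_det, det_updateRow_eq_det_mul_vecMul_inv hA, IsUnit.mul_iff,
    and_iff_right ((isUnit_iff_isUnit_det A).mp hA)]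

theorem inv_apply_eq_det_inv_mul_adjugate {K : Type*} [Field K] (A : Matrix ι ι K) (i j : ι) :
    A⁻¹ i j = A.det⁻¹ * A.adjugate i j := by
  rw [inv_def, Ring.inverse_eq_inv', Matrix.smul_apply, smul_eq_mul]

theorem inv_updateRow_apply_self {K : Type*} [Field K] {A : Matrix ι ι K} (hA : IsUnit A) (i : ι)
    (v : ι → K) (s : ι) : (A.updateRow i v)⁻¹ s i = A⁻¹ s i / (v ᵥ* A⁻¹) i :=
  calc (A.updateRow i v)⁻¹ s i
      = (A.updateRow i v).det⁻¹ * (A.updateRow i v).adjugate s i :=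
        inv_apply_eq_det_inv_mul_adjugate _ s i
    _ = (A.det * (v ᵥ* A⁻¹) i)⁻¹ * A.adjugate s i := by
        rw [det_updateRow_eq_det_mul_vecMul_inv hA, adjugate_updateRow_apply_self]
    _ = A.det⁻¹ * A.adjugate s i / (v ᵥ* A⁻¹) i := by
        rw [mul_inv, div_eq_mul_inv, mul_right_comm]
    _ = A⁻¹ s i / (v ᵥ* A⁻¹) i := by
        rw [inv_apply_eq_det_inv_mul_adjugate A s i]

end UpdateRow

theorem det_eq_zero_of_block_row_sum_eq_zero {ι R : Type*} [Fintype ι] [DecidableEq ι] [CommRing R]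
    {A : Matrix ι ι R} {p : ι → Prop} (hp : ∃ i, p i)
    (hblock : ∀ i, p i → ∀ j, ¬p j → A i j = 0) (hsum : ∀ i, p i → ∑ j, A i j = 0) :
    A.det = 0 := by
  classical
  obtain ⟨k, hk⟩ := hp
  have block_mulVec_one : A.toSquareBlockProp p *ᵥ 1 = 0 := by
    funext ⟨i, hi⟩
    calc (A.toSquareBlockProp p *ᵥ 1) ⟨i, hi⟩
        = ∑ j : {j // p j}, A i j := by
          simp only [mulVec, dotProduct, toSquareBlockProp_def, of_apply, Pi.one_apply, mul_one]
      _ = ∑ j, A i j := by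
          rw [← Fintype.sum_subtype_add_sum_subtype p, left_eq_add]
          exact Finset.sum_eq_zero fun j _ => hblock i hi j j.2
      _ = 0 := hsum i hi
  have block_det : (A.toSquareBlockProp p).det = 0 :=
    det_eq_zero_of_mulVec_eq_zero_of_mem_nonZeroDivisors (i := ⟨k, hk⟩) block_mulVec_one (one_mem _)
  rw [twoBlockTriangular_det' A p hblock, block_det, zero_mul]

/-- A Z-matrix (nonpositive off-diagonal entries) that is weakly row diagonally dominant: the class
of matrices for which the minimum principle `nonneg_of_mulVec_nonneg` is proved. For Z-matrices
dominance amounts to nonnegativity of the row sums, which is how it is encoded; unlike `IsRDDL`,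
this allows zero rows and needs no absolute value. -/
structure IsDominantZMatrix {ι R : Type*} [Fintype ι] [AddCommMonoid R] [LE R]
    (A : Matrix ι ι R) : Prop where
  off_diag_nonpos : ∀ i j, i ≠ j → A i j ≤ 0
  row_sum_nonneg : ∀ i, 0 ≤ ∑ j, A i j

theorem IsRDDL.isDominantZMatrix {n : ℕ} {M : Matrix (Fin n) (Fin n) ℝ} (hM : IsRDDL M) :
    IsDominantZMatrix M where
  off_diag_nonpos := hM.2.1
  row_sum_nonneg i := by
    have abs_eq : ∑ j ∈ Finset.univ.erase i, |M i j| = -∑ j ∈ Finset.univ.erase i, M i j := by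
      rw [← Finset.sum_neg_distrib]
      exact Finset.sum_congr rfl fun j hj =>
        abs_of_nonpos (hM.2.1 i j (Finset.ne_of_mem_erase hj).symm)
    rw [← Finset.add_sum_erase _ _ (Finset.mem_univ i)]
    linarith [hM.2.2 i]

namespace IsDominantZMatrix

variable {ι R : Type*} [Fintype ι] [CommRing R] [LinearOrder R] [IsStrictOrderedRing R]
  {A : Matrix ι ι R}

theorem row_sum_eq_zero_and_apply_eq_zero_of_neg_min (hA : IsDominantZMatrix A) {x : ι → R}
    {k : ι} (hAx : 0 ≤ (A *ᵥ x) k) (hmin : ∀ j, x k ≤ x j) (hneg : x k < 0) :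
    ∑ j, A k j = 0 ∧ ∀ j, x j ≠ x k → A k j = 0 := by
  have row_split : (A *ᵥ x) k = ∑ j, A k j * (x j - x k) + (∑ j, A k j) * x k := by
    simp only [mulVec, dotProduct, mul_sub, Finset.sum_sub_distrib, Finset.sum_mul, sub_add_cancel]
  have term_nonpos : ∀ j ∈ Finset.univ, A k j * (x j - x k) ≤ 0 := by
    intro j _
    obtain rfl | hkj := eq_or_ne k j
    · rw [sub_self, mul_zero]
    · exact mul_nonpos_of_nonpos_of_nonneg (hA.off_diag_nonpos k j hkj) (sub_nonneg.mpr (hmin j))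
  have sum_nonpos := Finset.sum_nonpos term_nonpos
  have row_sum_mul_nonpos : (∑ j, A k j) * x k ≤ 0 :=
    mul_nonpos_of_nonneg_of_nonpos (hA.row_sum_nonneg k) hneg.le
  have row_sum_mul_eq_zero : (∑ j, A k j) * x k = 0 := by linarith
  have sum_eq_zero : ∑ j, A k j * (x j - x k) = 0 := by linarith
  refine ⟨(mul_eq_zero.mp row_sum_mul_eq_zero).resolve_right hneg.ne, fun j hj => ?_⟩
  have term_eq_zero := (Finset.sum_eq_zero_iff_of_nonpos term_nonpos).mp sum_eq_zero j
    (Finset.mem_univ j)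
  exact (mul_eq_zero.mp term_eq_zero).resolve_right (sub_ne_zero.mpr hj)

variable [DecidableEq ι]

theorem nonneg_of_mulVec_nonneg (hA : IsDominantZMatrix A) (hdet : A.det ≠ 0) {x : ι → R}
    (hAx : 0 ≤ A *ᵥ x) : 0 ≤ x := by
  intro s
  have : Nonempty ι := ⟨s⟩
  obtain ⟨m, hmin⟩ := Finite.exists_min x
  refine le_trans (not_lt.mp fun hneg => hdet ?_) (hmin s)
  have row_eq_zero : ∀ k, x k = x m → ∑ j, A k j = 0 ∧ ∀ j, x j ≠ x k → A k j = 0 :=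
    fun k hk => hA.row_sum_eq_zero_and_apply_eq_zero_of_neg_min (hAx k) (hk ▸ hmin) (hk ▸ hneg)
  exact det_eq_zero_of_block_row_sum_eq_zero (p := fun i => x i = x m) ⟨m, rfl⟩
    (fun k hk j hj => (row_eq_zero k hk).2 j (hk ▸ hj)) (fun k hk => (row_eq_zero k hk).1)

theorem inv_apply_nonneg (hA : IsDominantZMatrix A) (hunit : IsUnit A) (s t : ι) :
    0 ≤ A⁻¹ s t := by
  have isUnit_det := (isUnit_iff_isUnit_det A).mp hunit
  have mulVec_col : A *ᵥ A⁻¹.col t = Pi.single t 1 := by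
    rw [← mulVec_single_one, mulVec_mulVec, mul_nonsing_inv A isUnit_det, one_mulVec]
  refine hA.nonneg_of_mulVec_nonneg isUnit_det.ne_zero (x := A⁻¹.col t) ?_ s
  rw [mulVec_col]
  exact Pi.single_nonneg.mpr zero_le_one

theorem one_le_diag_mul_inv_diag (hA : IsDominantZMatrix A) (hunit : IsUnit A) (t : ι) :
    1 ≤ A t t * A⁻¹ t t := by
  have diag_entry : A t t * A⁻¹ t t + ∑ j ∈ Finset.univ.erase t, A t j * A⁻¹ j t = 1 := by
    rw [Finset.add_sum_erase _ (fun j => A t j * A⁻¹ j t) (Finset.mem_univ t), ← mul_apply,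
      mul_nonsing_inv A ((isUnit_iff_isUnit_det A).mp hunit), one_apply_eq]
  have off_diag_sum_nonpos : ∑ j ∈ Finset.univ.erase t, A t j * A⁻¹ j t ≤ 0 :=
    Finset.sum_nonpos fun j hj => mul_nonpos_of_nonpos_of_nonneg
      (hA.off_diag_nonpos t j (Finset.ne_of_mem_erase hj).symm) (hA.inv_apply_nonneg hunit j t)
  linarith

end IsDominantZMatrix

theorem escape_probability_formula_general {ι K : Type*} [Fintype ι] [DecidableEq ι] [Field K]
    [LinearOrder K] [IsStrictOrderedRing K] {A : Matrix ι ι K} (hA : IsDominantZMatrix A)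
    (hunit : IsUnit A) (t : ι) :
    0 < A⁻¹ t t ∧ IsUnit (A.updateRow t (Pi.single t (A t t))) ∧
      ∀ s, (A.updateRow t (Pi.single t (A t t)))⁻¹ s t = A⁻¹ s t / (A t t * A⁻¹ t t) := by
  have diag_mul_pos : 0 < A t t * A⁻¹ t t :=
    zero_lt_one.trans_le (hA.one_le_diag_mul_inv_diag hunit t)
  have vecMul_inv : (Pi.single t (A t t) ᵥ* A⁻¹) t = A t t * A⁻¹ t t := by
    rw [single_vecMul, Pi.smul_apply, smul_eq_mul, row_apply]
  refine ⟨?inv_pos, ?isUnit, fun s => ?inv_apply⟩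
  case inv_pos =>
    exact (hA.inv_apply_nonneg hunit t t).lt_of_ne' (right_ne_zero_of_mul diag_mul_pos.ne')
  case isUnit =>
    rw [isUnit_updateRow_iff hunit, vecMul_inv]
    exact diag_mul_pos.ne'.isUnit
  case inv_apply => rw [inv_updateRow_apply_self hunit, vecMul_inv]

/-- For an invertible RDDL matrix `M` and index `t`, let `Mt` be `M` with row `t`
zeroed out except for the diagonal entry.  Then `(M⁻¹)ₜₜ > 0`, `Mt` is invertible, and
`((Mt)⁻¹)ₛₜ = (M⁻¹)ₛₜ / (Mₜₜ · (M⁻¹)ₜₜ)` for all `s`. -/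
theorem escape_probability_formula {n : ℕ}
    (M : Matrix (Fin n) (Fin n) ℝ) (hM : IsRDDL M) (hInv : IsUnit M)
    (t : Fin n) (Mt : Matrix (Fin n) (Fin n) ℝ)
    (hMt : Mt = M.updateRow t (fun j => if j = t then M t t else 0)) :
    0 < M⁻¹ t t ∧ IsUnit Mt ∧
      ∀ s, Mt⁻¹ s t = M⁻¹ s t / (M t t * M⁻¹ t t) := by
  have row_eq : (fun j => if j = t then M t t else 0) = Pi.single t (M t t) :=
    funext fun j => (Pi.single_apply t (M t t) j).symm
  rw [hMt, row_eq]
  exact escape_probability_formula_general hM.isDominantZMatrix hInv t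
end

section
/- Let M ∈ ℝ^{n×n} be an invertible RDDL matrix. Then every entry of M^{-1} is nonnegative, and moreover every diagonal entry satisfies (M^{-1})_{jj} ≥ 1/M_{jj} > 0. -/
open Matrix

/-!
For a Z-matrix `M` and a vector `u > 0`, let `t` be the largest scalar with `t • u ≤ y`. The
vector `y - t • u` is nonnegative and vanishes at some `i`, where `M *ᵥ (y - t • u)` is therefore
nonpositive. This rules out `t < 0` as soon as `M *ᵥ u` and `M *ᵥ y` are nonnegative and have no
common zero. An invertible `M` with `M *ᵥ u ≥ 0` thus admits a vector `v > 0` with `M *ᵥ v = 1`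
(take `y = M⁻¹ *ᵥ 1`), and with `v` in place of `u` the same argument shows that `M *ᵥ y ≥ 0`
implies `y ≥ 0`. Row diagonal dominance is the case `u = 1`.
-/

/-- A Z-matrix: all off-diagonal entries are nonpositive. This is the sign condition on RDDL
matrices, separated from their diagonal dominance. -/
def IsZMatrix {ι R : Type*} [Zero R] [LE R] (M : Matrix ι ι R) : Prop :=
  ∀ i j, i ≠ j → M i j ≤ 0

lemma IsZMatrix.mulVec_apply_le_diag_mul {ι R : Type*} [Fintype ι] [Semiring R]
    [PartialOrder R] [IsOrderedRing R] {M : Matrix ι ι R} (hM : IsZMatrix M)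
    {z : ι → R} (hz : 0 ≤ z) (i : ι) : (M *ᵥ z) i ≤ M i i * z i := by
  classical
  rw [mulVec, dotProduct, ← Finset.add_sum_erase _ _ (Finset.mem_univ i)]
  exact add_le_of_nonpos_right <| Finset.sum_nonpos fun j hj =>
    mul_nonpos_of_nonpos_of_nonneg (hM i j (Finset.ne_of_mem_erase hj).symm) (hz j)

lemma mulVec_one_nonneg_of_sum_abs_le_diag {ι R : Type*} [Fintype ι] [DecidableEq ι]
    [NonAssocRing R] [LinearOrder R] [IsOrderedAddMonoid R] {M : Matrix ι ι R}
    (hM : ∀ i, ∑ j ∈ Finset.univ.erase i, |M i j| ≤ M i i) : 0 ≤ M *ᵥ 1 := fun i =>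
  calc
    0 ≤ M i i - ∑ j ∈ Finset.univ.erase i, |M i j| := sub_nonneg.2 (hM i)
    _ ≤ M i i + ∑ j ∈ Finset.univ.erase i, M i j := by
      rw [sub_eq_add_neg, ← Finset.sum_neg_distrib]
      gcongr
      exact neg_abs_le _
    _ = (M *ᵥ 1) i := by
      rw [Finset.add_sum_erase _ _ (Finset.mem_univ i), mulVec, dotProduct_one]

section LinearOrderedField

variable {ι K : Type*} [Field K] [LinearOrder K] [IsStrictOrderedRing K]

lemma exists_smul_le_and_apply_eq [Finite ι] [Nonempty ι] {u : ι → K} (hu : ∀ i, 0 < u i)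
    (y : ι → K) : ∃ (t : K) (i : ι), t • u ≤ y ∧ y i = t * u i := by
  obtain ⟨i, hi⟩ := Finite.exists_min fun j => y j / u j
  exact ⟨y i / u i, i, fun j => (le_div_iff₀ (hu j)).1 (hi j), (div_mul_cancel₀ _ (hu i).ne').symm⟩

namespace IsZMatrix

variable [Fintype ι] {M : Matrix ι ι K} {u y : ι → K}

lemma nonneg_of_mulVec_nonneg (hM : IsZMatrix M) (hu : ∀ i, 0 < u i) (hMu : 0 ≤ M *ᵥ u)
    (hMy : 0 ≤ M *ᵥ y) (hpos : ∀ i, 0 < (M *ᵥ u) i ∨ 0 < (M *ᵥ y) i) : 0 ≤ y := by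
  cases isEmpty_or_nonempty ι
  · exact fun i => isEmptyElim i
  obtain ⟨t, i, hty, hyi⟩ := exists_smul_le_and_apply_eq hu y
  have touching : (M *ᵥ y) i ≤ t * (M *ᵥ u) i := by
    have h := hM.mulVec_apply_le_diag_mul (sub_nonneg.2 hty) i
    simpa [mulVec_sub, mulVec_smul, hyi] using h
  have ht : 0 ≤ t := by
    by_contra! ht
    rcases hpos i with hMui | hMyi
    · exact ((hMy i).trans touching).not_gt (mul_neg_of_neg_of_pos ht hMui)
    · exact (hMyi.trans_le touching).not_ge (mul_nonpos_of_nonpos_of_nonneg ht.le (hMu i))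
  exact fun j => (mul_nonneg ht (hu j).le).trans (hty j)

variable [DecidableEq ι]

lemma exists_pos_mulVec_eq_one (hM : IsZMatrix M) (hunit : IsUnit M) (hu : ∀ i, 0 < u i)
    (hMu : 0 ≤ M *ᵥ u) : ∃ v : ι → K, (∀ i, 0 < v i) ∧ M *ᵥ v = 1 := by
  obtain ⟨v, hv⟩ := mulVec_surjective_iff_isUnit.2 hunit 1
  have hv_nonneg : 0 ≤ v :=
    hM.nonneg_of_mulVec_nonneg hu hMu (hv ▸ zero_le_one) fun i => .inr (by simp [hv])
  refine ⟨v, fun i => (hv_nonneg i).lt_of_ne' fun hvi => ?_, hv⟩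
  simpa [hv, hvi, zero_lt_one.not_ge] using hM.mulVec_apply_le_diag_mul hv_nonneg i

lemma nonneg_of_isUnit_of_mulVec_nonneg (hM : IsZMatrix M) (hunit : IsUnit M)
    (hu : ∀ i, 0 < u i) (hMu : 0 ≤ M *ᵥ u) (hMy : 0 ≤ M *ᵥ y) : 0 ≤ y := by
  obtain ⟨v, hv_pos, hv⟩ := hM.exists_pos_mulVec_eq_one hunit hu hMu
  exact hM.nonneg_of_mulVec_nonneg hv_pos (hv ▸ zero_le_one) hMy fun i => .inl (by simp [hv])

end IsZMatrix

theorem rddl_inverse_nonneg_general [Fintype ι] [DecidableEq ι] {M : Matrix ι ι K} {u : ι → K}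
    (hM : IsZMatrix M) (hunit : IsUnit M) (hu : ∀ i, 0 < u i) (hMu : 0 ≤ M *ᵥ u) :
    (∀ i j, 0 ≤ M⁻¹ i j) ∧ (∀ j, 1 / M j j ≤ M⁻¹ j j ∧ 0 < 1 / M j j) := by
  have mulVec_col (j : ι) : M *ᵥ M⁻¹.col j = Pi.single j 1 := by
    rw [← mulVec_single_one, mulVec_mulVec,
      mul_nonsing_inv M ((isUnit_iff_isUnit_det M).1 hunit), one_mulVec]
  have col_nonneg (j : ι) : 0 ≤ M⁻¹.col j := by
    refine hM.nonneg_of_isUnit_of_mulVec_nonneg hunit hu hMu ?_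
    rw [mulVec_col, Pi.single_nonneg]
    exact zero_le_one
  refine ⟨fun i j => col_nonneg j i, fun j => ?_⟩
  have one_le : 1 ≤ M j j * M⁻¹ j j := by
    simpa [mulVec_col] using hM.mulVec_apply_le_diag_mul (col_nonneg j) j
  have diag_pos : 0 < M j j :=
    pos_of_mul_pos_left (zero_lt_one.trans_le one_le) (col_nonneg j j)
  exact ⟨(div_le_iff₀' diag_pos).2 one_le, one_div_pos.2 diag_pos⟩

end LinearOrderedField

/-- The inverse of an invertible RDDL matrix is entrywise nonnegative, and its diagonal
entries satisfy `(M⁻¹)ⱼⱼ ≥ 1 / Mⱼⱼ > 0`. -/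
theorem rddl_inverse_nonneg {n : ℕ}
    (M : Matrix (Fin n) (Fin n) ℝ) (hM : IsRDDL M) (hInv : IsUnit M) :
    (∀ i j, 0 ≤ M⁻¹ i j) ∧ (∀ j, 1 / M j j ≤ M⁻¹ j j ∧ 0 < 1 / M j j) :=
  rddl_inverse_nonneg_general hM.2.1 hInv (fun _ => one_pos)
    (mulVec_one_nonneg_of_sum_abs_le_diag hM.2.2)
end

section
/- Let M ∈ ℝ^{n×n} be an invertible RDDL matrix, b ∈ ℝ^n a nonnegative vector, and x̄ := M^{-1}b. Let 0 < ε < β/2 and let x̃ ∈ ℝ^n satisfy ‖x̃ − x̄‖₂ ≤ ε‖b‖₂. Let F := { i ∈ [n] : x̄_i ≥ β‖b‖₁ }. Then for all i ∈ F, ((β−ε)/β)·x̄_i ≤ x̃_i ≤ ((β+ε)/β)·x̄_i; in particular x̃_F ≈_{3ε/(2β)} x̄_F entrywise. -/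
open Matrix

/-- `a ≈_ε b` : `e^{-ε}·a ≤ b ≤ e^{ε}·a`. -/
def EApprox (ε a b : ℝ) : Prop := Real.exp (-ε) * a ≤ b ∧ b ≤ Real.exp ε * a

/-- The ℓ₁ norm of a vector. -/
noncomputable def l1norm {n : ℕ} (v : Fin n → ℝ) : ℝ := ∑ i, |v i|

/-- The ℓ₂ norm of a vector. -/
noncomputable def l2norm {n : ℕ} (v : Fin n → ℝ) : ℝ := Real.sqrt (∑ i, (v i) ^ 2)

/-!
The single bound `‖b‖₂ ≤ ‖b‖₁` turns the normwise error into a relative one at a large entry: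
`|x̃ᵢ - x̄ᵢ| ≤ ‖x̃ - x̄‖₂ ≤ ε ‖b‖₂ ≤ ε ‖b‖₁ ≤ (ε / β) x̄ᵢ`.
A relative error `t ≤ 1 / 2` is in turn a multiplicative error `exp (± 3 t / 2)`, because
`1 + t ≤ exp (3 t / 2)` and, by the quadratic Taylor bound for `exp`, `exp (-3 t / 2) ≤ 1 - t`.
-/

section Norms

variable {m n : ℕ}

lemma l1norm_nonneg (v : Fin n → ℝ) : 0 ≤ l1norm v :=
  Finset.sum_nonneg fun _ _ ↦ abs_nonneg _

lemma l2norm_le_l1norm (v : Fin n → ℝ) : l2norm v ≤ l1norm v := by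
  refine Real.sqrt_le_iff.mpr ⟨l1norm_nonneg v, ?_⟩
  simpa only [l1norm, sq_abs] using
    Finset.sum_sq_le_sq_sum_of_nonneg (s := Finset.univ) fun j _ ↦ abs_nonneg (v j)

lemma abs_apply_le_l2norm (v : Fin n → ℝ) (i : Fin n) : |v i| ≤ l2norm v :=
  Real.abs_le_sqrt <|
    Finset.single_le_sum (f := fun j ↦ v j ^ 2) (fun _ _ ↦ sq_nonneg _) (Finset.mem_univ i)

lemma abs_sub_le_div_mul_of_l2norm_sub_le {x y : Fin n → ℝ} {b : Fin m → ℝ} {ε β : ℝ}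
    (hε : 0 ≤ ε) (hβ : 0 < β) (hxy : l2norm (y - x) ≤ ε * l2norm b) {i : Fin n}
    (hi : β * l1norm b ≤ x i) : |y i - x i| ≤ ε / β * x i :=
  calc |y i - x i| ≤ l2norm (y - x) := abs_apply_le_l2norm (y - x) i
    _ ≤ ε * l2norm b := hxy
    _ ≤ ε * l1norm b := by gcongr; exact l2norm_le_l1norm b
    _ = ε / β * (β * l1norm b) := by field_simp
    _ ≤ ε / β * x i := by gcongr

end Norms

section RelativeError

variable {t x y : ℝ}

lemma exp_neg_three_halves_mul_le_one_sub (ht₀ : 0 ≤ t) (ht : t ≤ 1 / 2) :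
    Real.exp (-(3 / 2 * t)) ≤ 1 - t := by
  have hquad : 1 + 3 / 2 * t + (3 / 2 * t) ^ 2 / 2 ≤ Real.exp (3 / 2 * t) :=
    Real.quadratic_le_exp_of_nonneg (by positivity)
  have hgap : 0 ≤ t * (1 / 2 - 3 / 8 * t - 9 / 8 * t ^ 2) := mul_nonneg ht₀ (by nlinarith)
  rw [Real.exp_neg, inv_le_iff_one_le_mul₀' (Real.exp_pos _)]
  calc 1 ≤ 1 + t * (1 / 2 - 3 / 8 * t - 9 / 8 * t ^ 2) := by linarith
    _ = (1 + 3 / 2 * t + (3 / 2 * t) ^ 2 / 2) * (1 - t) := by ring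
    _ ≤ Real.exp (3 / 2 * t) * (1 - t) := by gcongr; linarith

lemma EApprox.symm {ε a b : ℝ} (h : EApprox ε a b) : EApprox ε b a := by
  rw [EApprox, Real.exp_neg, inv_mul_le_iff₀ (Real.exp_pos ε)]
  refine ⟨h.2, ?_⟩
  simpa only [Real.exp_neg, inv_mul_le_iff₀ (Real.exp_pos ε)] using h.1

lemma EApprox.of_abs_sub_le (ht₀ : 0 < t) (ht : t ≤ 1 / 2) (hxy : |y - x| ≤ t * x) :
    EApprox (3 / 2 * t) x y := by
  have hx : 0 ≤ x := nonneg_of_mul_nonneg_right ((abs_nonneg _).trans hxy) ht₀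
  obtain ⟨hlower, hupper⟩ := abs_le.mp hxy
  constructor
  · calc Real.exp (-(3 / 2 * t)) * x ≤ (1 - t) * x := by
          gcongr; exact exp_neg_three_halves_mul_le_one_sub ht₀.le ht
      _ ≤ y := by linarith
  · calc y ≤ (3 / 2 * t + 1) * x := by nlinarith
      _ ≤ Real.exp (3 / 2 * t) * x := by gcongr; exact Real.add_one_le_exp _

end RelativeError

theorem large_entries_guarantee_general {m n : ℕ} (M : Matrix (Fin m) (Fin n) ℝ)
    {xbar xtil : Fin n → ℝ} {ε β : ℝ} (hε : 0 < ε) (hεβ : ε ≤ β / 2)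
    (hxtil : l2norm (xtil - xbar) ≤ ε * l2norm (M *ᵥ xbar)) {i : Fin n}
    (hi : β * l1norm (M *ᵥ xbar) ≤ xbar i) :
    ((β - ε) / β * xbar i ≤ xtil i ∧ xtil i ≤ (β + ε) / β * xbar i) ∧
      EApprox (3 * ε / (2 * β)) (xtil i) (xbar i) := by
  have hβ : 0 < β := by linarith
  have hrel : |xtil i - xbar i| ≤ ε / β * xbar i :=
    abs_sub_le_div_mul_of_l2norm_sub_le hε.le hβ hxtil hi
  have ht : ε / β ≤ 1 / 2 := by rw [div_le_iff₀ hβ]; linarith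
  rw [← one_sub_div hβ.ne', ← one_add_div hβ.ne', mul_div_mul_comm]
  obtain ⟨hlower, hupper⟩ := abs_le.mp hrel
  exact ⟨⟨by linarith, by linarith⟩, (EApprox.of_abs_sub_le (by positivity) ht hrel).symm⟩

/-- A normwise approximate solution multiplicatively approximates all large entries of
the exact solution `x̄ = M⁻¹ b`. -/
theorem large_entries_guarantee {n : ℕ}
    (M : Matrix (Fin n) (Fin n) ℝ) (hM : IsRDDL M) (hInv : IsUnit M)
    (b : Fin n → ℝ) (hb : ∀ i, 0 ≤ b i)
    (xbar : Fin n → ℝ) (hxbar : xbar = M⁻¹ *ᵥ b)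
    (ε β : ℝ) (hε : 0 < ε) (hεβ : ε < β / 2)
    (xtil : Fin n → ℝ) (hxtil : l2norm (xtil - xbar) ≤ ε * l2norm b) :
    ∀ i, β * l1norm b ≤ xbar i →
      ((β - ε) / β * xbar i ≤ xtil i ∧ xtil i ≤ (β + ε) / β * xbar i) ∧
      EApprox (3 * ε / (2 * β)) (xtil i) (xbar i) := by
  obtain rfl : M *ᵥ xbar = b := by
    rw [hxbar, mulVec_mulVec, mul_nonsing_inv M ((isUnit_iff_isUnit_det M).mp hInv), one_mulVec]
  exact fun _ ↦ large_entries_guarantee_general M hε hεβ.le hxtil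
end

section
/- Let M ∈ ℝ^{n×n} be an invertible RDDL matrix with all entries integers in [−U, U] for some integer U ≥ 1, and let b ∈ ℝ^n be a nonnegative vector. Then there exists an index i ∈ [n] such that (M^{-1}b)_i ≥ ‖b‖₁/(nU). -/
open Matrix

/-!
For a Z-matrix `M` with nonnegative row sums, `0 < M x` forces `0 ≤ x`: at the index of a negative
minimum of `x`, moving the other coordinates down to that minimum shows that the entry of `M x` is
at most a row sum times a negative number. If `M` is invertible, `M y = 1` has a solution, and
adding a small positive multiple of `y` reduces `0 ≤ M x` to the strict case, so `M⁻¹` preserves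
nonnegativity.

Hence `x = M⁻¹ b` is nonnegative, and dropping the nonpositive off-diagonal terms in `M x = b`
leaves `b i ≤ M i i * x i`. Summing over `i`, `∑ i, b i ≤ M.trace * max x`, and `M.trace ≤ n * U`.
-/

section OffDiagNonpos

variable {ι R : Type*} [Fintype ι] [Ring R] [PartialOrder R] [IsOrderedRing R] {M : Matrix ι ι R}
  {i : ι} {x z : ι → R}

lemma mulVec_apply_le_of_le_of_apply_eq (hM : ∀ j, i ≠ j → M i j ≤ 0) (hzx : z ≤ x)
    (hi : z i = x i) : (M *ᵥ x) i ≤ (M *ᵥ z) i := by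
  refine Finset.sum_le_sum fun j _ ↦ ?_
  rcases eq_or_ne i j with rfl | hij
  · rw [hi]
  · exact mul_le_mul_of_nonpos_left (hzx j) (hM j hij)

lemma mulVec_apply_le_rowSum_mul (hM : ∀ j, i ≠ j → M i j ≤ 0) (hx : ∀ j, x i ≤ x j) :
    (M *ᵥ x) i ≤ (∑ j, M i j) * x i := by
  rw [Finset.sum_mul]
  exact mulVec_apply_le_of_le_of_apply_eq (z := fun _ ↦ x i) hM hx rfl

lemma mulVec_apply_le_diag_mul (hM : ∀ j, i ≠ j → M i j ≤ 0) (hx : 0 ≤ x) :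
    (M *ᵥ x) i ≤ M i i * x i := by
  classical
  have hsingle : Pi.single i (x i) ≤ x := update_le_iff.2 ⟨le_rfl, fun j _ ↦ hx j⟩
  simpa using mulVec_apply_le_of_le_of_apply_eq hM hsingle (Pi.single_eq_same _ _)

end OffDiagNonpos

lemma mulVec_inv_mulVec {ι R : Type*} [Fintype ι] [DecidableEq ι] [CommRing R] {M : Matrix ι ι R}
    (hunit : IsUnit M) (b : ι → R) : M *ᵥ (M⁻¹ *ᵥ b) = b := by
  rw [mulVec_mulVec, mul_nonsing_inv M ((isUnit_iff_isUnit_det M).1 hunit), one_mulVec]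

lemma trace_le_card_mul {ι R : Type*} [Fintype ι] [NonAssocSemiring R] [PartialOrder R]
    [IsOrderedAddMonoid R] {M : Matrix ι ι R} {c : R} (hM : ∀ i, M i i ≤ c) :
    M.trace ≤ Fintype.card ι * c := by
  simpa only [trace, nsmul_eq_mul, Finset.card_univ] using
    Finset.sum_le_card_nsmul Finset.univ M.diag c fun i _ ↦ hM i

/-- A Z-matrix (nonpositive off-diagonal entries) with nonnegative row sums. Given the signs, the
row sum condition is row diagonal dominance; unlike for `IsRDDL`, the diagonal may vanish. -/
structure IsRowDominantZMatrix {ι R : Type*} [Fintype ι] [AddCommMonoid R] [LE R]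
    (M : Matrix ι ι R) : Prop where
  offDiag_nonpos : ∀ i j, i ≠ j → M i j ≤ 0
  rowSum_nonneg : ∀ i, 0 ≤ ∑ j, M i j

namespace IsRowDominantZMatrix

section Ring

variable {ι R : Type*} [Fintype ι] [Ring R] {M : Matrix ι ι R}

lemma diag_nonneg [PartialOrder R] [IsOrderedRing R] (hM : IsRowDominantZMatrix M) (i : ι) :
    0 ≤ M i i := by
  calc 0 ≤ ∑ j, M i j := hM.rowSum_nonneg i
    _ = (M *ᵥ 1) i := by simp [mulVec, dotProduct]
    _ ≤ M i i * (1 : ι → R) i := mulVec_apply_le_diag_mul (hM.offDiag_nonpos i) zero_le_one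
    _ = M i i := mul_one _

lemma nonneg_of_mulVec_pos [LinearOrder R] [IsOrderedRing R] (hM : IsRowDominantZMatrix M)
    {x : ι → R} (hx : ∀ i, 0 < (M *ᵥ x) i) : 0 ≤ x := by
  intro k
  have : Nonempty ι := ⟨k⟩
  obtain ⟨i, hmin⟩ := Finite.exists_min x
  have hpos : 0 < (∑ j, M i j) * x i :=
    (hx i).trans_le (mulVec_apply_le_rowSum_mul (hM.offDiag_nonpos i) hmin)
  have hi : 0 ≤ x i := by
    by_contra! hneg
    exact hpos.not_ge (mul_nonpos_of_nonneg_of_nonpos (hM.rowSum_nonneg i) hneg.le)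
  exact hi.trans (hmin k)

end Ring

section CommRing

variable {ι R : Type*} [Fintype ι] [DecidableEq ι] [CommRing R] [LinearOrder R]
  [IsStrictOrderedRing R] {M : Matrix ι ι R}

lemma nonneg_of_mulVec_nonneg (hM : IsRowDominantZMatrix M) (hunit : IsUnit M) {x : ι → R}
    (hx : 0 ≤ M *ᵥ x) : 0 ≤ x := by
  obtain ⟨y, hy⟩ : ∃ y, M *ᵥ y = 1 := mulVec_surjective_iff_isUnit.2 hunit 1
  have hy_nonneg : 0 ≤ y := hM.nonneg_of_mulVec_pos fun i ↦ by simp [hy]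
  intro k
  by_contra! hk
  rw [Pi.zero_apply] at hk
  -- `x + t • y` with `t = -x k / (1 + y k)`, cleared of its denominator: its `k`-th entry is `x k`.
  have hcomb : 0 ≤ (1 + y k) • x + (-x k) • y := hM.nonneg_of_mulVec_pos fun i ↦ by
    simp only [mulVec_add, mulVec_smul, hy, Pi.add_apply, Pi.smul_apply, Pi.one_apply,
      smul_eq_mul, mul_one]
    have : 0 ≤ (1 + y k) * (M *ᵥ x) i :=
      mul_nonneg (add_nonneg zero_le_one (hy_nonneg k)) (hx i)
    linarith
  have hcomb_apply : ((1 + y k) • x + (-x k) • y) k = x k := by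
    simp only [Pi.add_apply, Pi.smul_apply, smul_eq_mul]
    ring
  exact hk.not_ge (hcomb_apply ▸ hcomb k)

lemma inv_mulVec_nonneg (hM : IsRowDominantZMatrix M) (hunit : IsUnit M) {b : ι → R}
    (hb : 0 ≤ b) : 0 ≤ M⁻¹ *ᵥ b :=
  hM.nonneg_of_mulVec_nonneg hunit <| by rwa [mulVec_inv_mulVec hunit]

lemma le_diag_mul_inv_mulVec (hM : IsRowDominantZMatrix M) (hunit : IsUnit M) {b : ι → R}
    (hb : 0 ≤ b) (i : ι) : b i ≤ M i i * (M⁻¹ *ᵥ b) i := by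
  simpa only [mulVec_inv_mulVec hunit b] using
    mulVec_apply_le_diag_mul (hM.offDiag_nonpos i) (hM.inv_mulVec_nonneg hunit hb)

end CommRing

end IsRowDominantZMatrix

theorem exists_large_entry_general {ι K : Type*} [Fintype ι] [DecidableEq ι] [Nonempty ι] [Field K]
    [LinearOrder K] [IsStrictOrderedRing K] {M : Matrix ι ι K} (hM : IsRowDominantZMatrix M)
    (hunit : IsUnit M) {b : ι → K} (hb : 0 ≤ b) :
    ∃ i, (∑ j, b j) / M.trace ≤ (M⁻¹ *ᵥ b) i := by
  obtain ⟨i, hmax⟩ := Finite.exists_max (M⁻¹ *ᵥ b)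
  refine ⟨i, div_le_of_le_mul₀ (Finset.sum_nonneg fun j _ ↦ hM.diag_nonneg j)
    (hM.inv_mulVec_nonneg hunit hb i) ?_⟩
  calc ∑ j, b j ≤ ∑ j, M j j * (M⁻¹ *ᵥ b) j :=
        Finset.sum_le_sum fun j _ ↦ hM.le_diag_mul_inv_mulVec hunit hb j
    _ ≤ ∑ j, M j j * (M⁻¹ *ᵥ b) i :=
        Finset.sum_le_sum fun j _ ↦ mul_le_mul_of_nonneg_left (hmax j) (hM.diag_nonneg j)
    _ = (M⁻¹ *ᵥ b) i * M.trace := by simp only [← Finset.sum_mul, mul_comm, trace, diag_apply]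

namespace IsRDDL

variable {n : ℕ} {M : Matrix (Fin n) (Fin n) ℝ}

lemma isRowDominantZMatrix (hM : IsRDDL M) : IsRowDominantZMatrix M where
  offDiag_nonpos := hM.2.1
  rowSum_nonneg i := by
    rw [← Finset.add_sum_erase _ _ (Finset.mem_univ i)]
    have hoff : -∑ j ∈ Finset.univ.erase i, M i j ≤ M i i :=
      (neg_le_abs _).trans <| (Finset.abs_sum_le_sum_abs _ _).trans (hM.2.2 i)
    linarith

lemma trace_pos [NeZero n] (hM : IsRDDL M) : 0 < M.trace :=
  Finset.sum_pos (fun i _ ↦ hM.1 i) Finset.univ_nonempty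

end IsRDDL

/-- For an invertible RDDL matrix with integer entries in `[-U, U]` and a nonnegative
vector `b`, some entry of `M⁻¹ b` is at least `‖b‖₁ / (n·U)`. -/
theorem exists_large_entry {n : ℕ} (hn : 0 < n) (U : ℕ) (hU : 1 ≤ U)
    (M : Matrix (Fin n) (Fin n) ℝ) (hM : IsRDDL M) (hInv : IsUnit M)
    (hint : ∀ i j, ∃ z : ℤ, M i j = (z : ℝ) ∧ |z| ≤ (U : ℤ))
    (b : Fin n → ℝ) (hb : ∀ i, 0 ≤ b i) :
    ∃ i, l1norm b / ((n : ℝ) * U) ≤ (M⁻¹ *ᵥ b) i := by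
  have : NeZero n := ⟨hn.ne'⟩
  have hdiag : ∀ i, M i i ≤ U := fun i ↦ by
    obtain ⟨z, hz, hzU⟩ := hint i i
    rw [hz]
    exact_mod_cast (le_abs_self z).trans hzU
  obtain ⟨i, hi⟩ := exists_large_entry_general hM.isRowDominantZMatrix hInv hb
  refine ⟨i, le_trans ?_ hi⟩
  simp only [l1norm, abs_of_nonneg (hb _)]
  refine div_le_div_of_nonneg_left (Finset.sum_nonneg fun j _ ↦ hb j) hM.trace_pos ?_
  simpa only [Fintype.card_fin] using trace_le_card_mul hdiag
end

section
/- Let M, N ∈ ℝ^{n×n} be invertible RDDL matrices and ε ≥ 0. Assume that M and N are entrywise e^ε-approximations of each other in magnitude, i.e., M_{ii} ≈_ε N_{ii} for all i and (−M_{ij}) ≈_ε (−N_{ij}) for all i ≠ j, and assume additionally that the (nonnegative) row sums approximate each other: ∑_{j=1}^n M_{ij} ≈_ε ∑_{j=1}^n N_{ij} for every i. Then the (entrywise nonnegative) inverses satisfy (M^{-1})_{ij} ≈_{2εn} (N^{-1})_{ij} for all i, j. -/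
open Matrix

/-!
Consider the cone of (possibly singular) row diagonally dominant matrices with nonpositive
off-diagonal entries. For `A` in this cone and `s > 0`, the matrix `s • 1 + A` satisfies a minimum
principle, so it is nonsingular. Hence the determinant does not vanish on the segment from `1` to `A`,
except possibly at `A`, and is nonnegative on the whole cone; the minimum principle and `s → 0` then
give nonnegativity of the adjugate. Determinant and cofactors are multilinear in the rows, so
expanding them at `A + B` shows that they are also monotone along the cone order. The hypotheses
mean that `e^ε • M - N` and `e^ε • N - M` lie in the cone. The determinant has degree `n` and
the adjugate degree `n - 1`, so they change by factors of at most `e^{εn}` and `e^{ε(n-1)}`, and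
the entries of the inverse, being their quotients, by at most `e^{ε(2n-1)}`.
-/

theorem multilinearMap_le_map_add_of_piecewise_nonneg {R ι F : Type*} {E : ι → Type*}
    [Semiring R] [Finite ι] [DecidableEq ι] [∀ i, AddCommMonoid (E i)] [∀ i, Module R (E i)]
    [AddCommMonoid F] [PartialOrder F] [IsOrderedAddMonoid F] [Module R F]
    (f : MultilinearMap R E F) {v w : ∀ i, E i} (h : ∀ s : Finset ι, 0 ≤ f (s.piecewise v w)) :
    f v ≤ f (v + w) := by
  have := Fintype.ofFinite ι
  rw [f.map_add_univ]
  simpa using Finset.single_le_sum (fun s _ => h s) (Finset.mem_univ Finset.univ)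

theorem det_le_det_add_of_piecewise_nonneg {ι R : Type*} [Fintype ι] [DecidableEq ι] [CommRing R]
    [PartialOrder R] [IsOrderedAddMonoid R] {A B : Matrix ι ι R}
    (h : ∀ s : Finset ι, 0 ≤ (of fun k => if k ∈ s then A k else B k).det) : A.det ≤ (A + B).det :=
  multilinearMap_le_map_add_of_piecewise_nonneg detRowAlternating.toMultilinearMap h

/-- The closed convex cone of matrices obtained from the RDDL matrices by allowing zero diagonal
entries. For matrices with nonpositive off-diagonal entries, diagonal dominance of a row is
nonnegativity of its sum. -/
def IsWeakRDDL {ι R : Type*} [Fintype ι] [AddCommMonoid R] [LE R] (A : Matrix ι ι R) : Prop :=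
  ∀ i, (∀ j, i ≠ j → A i j ≤ 0) ∧ 0 ≤ ∑ j, A i j

theorem IsRDDL.isWeakRDDL {n : ℕ} {M : Matrix (Fin n) (Fin n) ℝ} (hM : IsRDDL M) :
    IsWeakRDDL M := by
  refine fun i => ⟨hM.2.1 i, ?_⟩
  have habs : ∑ j ∈ Finset.univ.erase i, |M i j| = -∑ j ∈ Finset.univ.erase i, M i j := by
    rw [← Finset.sum_neg_distrib]
    exact Finset.sum_congr rfl fun j hj =>
      abs_of_nonpos (hM.2.1 i j (Finset.ne_of_mem_erase hj).symm)
  rw [← Finset.add_sum_erase _ _ (Finset.mem_univ i)]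
  linarith [hM.2.2 i]

namespace IsWeakRDDL

variable {ι : Type*} [Fintype ι]

theorem piecewise {R : Type*} [AddCommMonoid R] [LE R] [DecidableEq ι] {A B : Matrix ι ι R}
    (hA : IsWeakRDDL A) (hB : IsWeakRDDL B) (s : Finset ι) :
    IsWeakRDDL (of fun k => if k ∈ s then A k else B k) := by
  intro i
  by_cases hi : i ∈ s
  · simpa [hi] using hA i
  · simpa [hi] using hB i

section OrderedRing

variable {R : Type*} [Ring R] [PartialOrder R] [IsOrderedRing R] {A B : Matrix ι ι R}

theorem one [DecidableEq ι] : IsWeakRDDL (1 : Matrix ι ι R) :=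
  fun i => ⟨fun _ hij => (one_apply_ne hij).le, by simp [one_apply]⟩

theorem add (hA : IsWeakRDDL A) (hB : IsWeakRDDL B) : IsWeakRDDL (A + B) :=
  fun i => ⟨fun j hij => add_nonpos ((hA i).1 j hij) ((hB i).1 j hij), by
    simpa only [Matrix.add_apply, Finset.sum_add_distrib] using add_nonneg (hA i).2 (hB i).2⟩

theorem smul (hA : IsWeakRDDL A) {c : R} (hc : 0 ≤ c) : IsWeakRDDL (c • A) :=
  fun i => ⟨fun j hij => mul_nonpos_of_nonneg_of_nonpos hc ((hA i).1 j hij), by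
    simpa only [Matrix.smul_apply, smul_eq_mul, ← Finset.mul_sum] using mul_nonneg hc (hA i).2⟩

theorem smul_sub_of_le {c : R} (hoff : ∀ i j, i ≠ j → -B i j ≤ c * -A i j)
    (hrow : ∀ i, ∑ j, B i j ≤ c * ∑ j, A i j) : IsWeakRDDL (c • A - B) :=
  fun i => ⟨fun j hij => by simpa [add_comm] using hoff i j hij, by
    simpa [Finset.sum_sub_distrib, ← Finset.mul_sum] using hrow i⟩

end OrderedRing

section LinearOrderedRing

variable {R : Type*} [CommRing R] [LinearOrder R] [IsStrictOrderedRing R] [DecidableEq ι]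
  {A : Matrix ι ι R}

theorem nonneg_of_smul_one_add_mulVec_nonneg (hA : IsWeakRDDL A) {s : R} (hs : 0 < s)
    {v : ι → R} (hv : 0 ≤ (s • (1 : Matrix ι ι R) + A) *ᵥ v) : 0 ≤ v := by
  intro i
  have : Nonempty ι := ⟨i⟩
  obtain ⟨m, hm⟩ := Finite.exists_min v
  refine le_trans (not_lt.mp fun hneg : v m < 0 => ?_) (hm i)
  have hAv : (A *ᵥ v) m ≤ (∑ j, A m j) * v m := by
    rw [mulVec, dotProduct, Finset.sum_mul]
    refine Finset.sum_le_sum fun j _ => ?_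
    rcases eq_or_ne m j with rfl | hmj
    · exact le_rfl
    · exact mul_le_mul_of_nonpos_left (hm j) ((hA m).1 j hmj)
  have hsum : (∑ j, A m j) * v m ≤ 0 := mul_nonpos_of_nonneg_of_nonpos (hA m).2 hneg.le
  have hvm : 0 ≤ s * v m + (A *ᵥ v) m := by simpa [add_mulVec, smul_mulVec] using hv m
  linarith [mul_neg_of_pos_of_neg hs hneg]

theorem det_smul_one_add_ne_zero (hA : IsWeakRDDL A) {s : R} (hs : 0 < s) :
    (s • (1 : Matrix ι ι R) + A).det ≠ 0 := by
  intro hdet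
  obtain ⟨v, hv, hAv⟩ := exists_mulVec_eq_zero_iff.mpr hdet
  have hpos : 0 ≤ v := hA.nonneg_of_smul_one_add_mulVec_nonneg hs hAv.ge
  have hneg : 0 ≤ -v :=
    hA.nonneg_of_smul_one_add_mulVec_nonneg hs (by rw [mulVec_neg, hAv, neg_zero])
  exact hv (le_antisymm (neg_nonneg.mp hneg) hpos)

end LinearOrderedRing

variable [DecidableEq ι] {A B M N : Matrix ι ι ℝ}

theorem det_nonneg (hA : IsWeakRDDL A) : 0 ≤ A.det := by
  by_contra! hneg
  let f : ℝ → ℝ := fun t => ((1 - t) • (1 : Matrix ι ι ℝ) + t • A).det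
  have hf : Continuous f := by fun_prop
  have hzero : (0 : ℝ) ∈ Set.Ioc (f 1) (f 0) := by simp [f, hneg]
  obtain ⟨t, ht, hft⟩ := intermediate_value_Ico' zero_le_one hf.continuousOn hzero
  exact (hA.smul ht.1).det_smul_one_add_ne_zero (sub_pos.mpr ht.2) hft

theorem adjugate_smul_one_add_nonneg (hA : IsWeakRDDL A) {s : ℝ} (hs : 0 < s) (i j : ι) :
    0 ≤ (s • (1 : Matrix ι ι ℝ) + A).adjugate i j := by
  set S := s • (1 : Matrix ι ι ℝ) + A
  have hdet : 0 ≤ S.det := ((one.smul hs.le).add hA).det_nonneg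
  have hcol : 0 ≤ S *ᵥ S.adjugate.col j := by
    intro k
    change 0 ≤ (S * S.adjugate) k j
    rw [mul_adjugate, Matrix.smul_apply, one_apply]
    split_ifs <;> simp [hdet]
  exact hA.nonneg_of_smul_one_add_mulVec_nonneg hs hcol i

theorem adjugate_nonneg (hA : IsWeakRDDL A) (i j : ι) : 0 ≤ A.adjugate i j := by
  let f : ℝ → ℝ := fun s => (s • (1 : Matrix ι ι ℝ) + A).adjugate i j
  have hf : Continuous f := by fun_prop
  have hzero : (0 : ℝ) ∈ closure (Set.Ioi 0) := by simp
  have hf0 : 0 ≤ f 0 := le_on_closure (fun s hs => hA.adjugate_smul_one_add_nonneg hs i j)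
    continuousOn_const hf.continuousOn hzero
  simpa [f] using hf0

theorem inv_nonneg (hA : IsWeakRDDL A) (i j : ι) : 0 ≤ A⁻¹ i j := by
  rw [inv_def, Ring.inverse_eq_inv']
  exact mul_nonneg (_root_.inv_nonneg.mpr hA.det_nonneg) (hA.adjugate_nonneg i j)

theorem det_pos (hA : IsWeakRDDL A) (hinv : IsUnit A) : 0 < A.det :=
  hA.det_nonneg.lt_of_ne' ((isUnit_iff_isUnit_det A).mp hinv).ne_zero

theorem det_le_det_add (hA : IsWeakRDDL A) (hB : IsWeakRDDL B) : A.det ≤ (A + B).det :=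
  det_le_det_add_of_piecewise_nonneg fun s => (hA.piecewise hB s).det_nonneg

theorem adjugate_le_adjugate_add (hA : IsWeakRDDL A) (hB : IsWeakRDDL B) (i j : ι) :
    A.adjugate i j ≤ (A + B).adjugate i j := by
  -- The cofactors of row `j` ignore that row, so the summand `B` contributes a zero row there.
  have hadd : A.updateRow j (Pi.single i 1) + B.updateRow j 0 =
      (A + B).updateRow j (Pi.single i 1) := by
    ext k l
    rcases eq_or_ne k j with rfl | hk <;> simp [*]
  rw [adjugate_apply, adjugate_apply, ← hadd]
  refine det_le_det_add_of_piecewise_nonneg fun s => ?_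
  by_cases hj : j ∈ s
  · have hrows : (of fun k =>
          if k ∈ s then A.updateRow j (Pi.single i 1) k else B.updateRow j 0 k) =
        (of fun k => if k ∈ s then A k else B k).updateRow j (Pi.single i 1) := by
      ext k l
      rcases eq_or_ne k j with rfl | hk
      · simp [hj]
      · by_cases hks : k ∈ s <;> simp [hk, hks]
    rw [hrows]
    exact ((hA.piecewise hB s).adjugate_nonneg i j).trans_eq (adjugate_apply _ i j)
  · refine (det_eq_zero_of_row_eq_zero j fun k => ?_).ge
    simp [hj]

theorem det_le_pow_mul_det (hN : IsWeakRDDL N) {c : ℝ} (hNM : IsWeakRDDL (c • M - N)) :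
    N.det ≤ c ^ Fintype.card ι * M.det := by
  simpa [det_smul] using hN.det_le_det_add hNM

theorem adjugate_le_pow_mul_adjugate (hN : IsWeakRDDL N) {c : ℝ}
    (hNM : IsWeakRDDL (c • M - N)) (i j : ι) :
    N.adjugate i j ≤ c ^ (Fintype.card ι - 1) * M.adjugate i j := by
  simpa [adjugate_smul] using hN.adjugate_le_adjugate_add hNM i j

theorem inv_le_pow_mul_inv (hM : IsWeakRDDL M) (hN : IsWeakRDDL N) (hMinv : IsUnit M)
    (hNinv : IsUnit N) {c : ℝ} (hNM : IsWeakRDDL (c • M - N))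
    (hMN : IsWeakRDDL (c • N - M)) (i j : ι) :
    N⁻¹ i j ≤ c ^ (2 * Fintype.card ι - 1) * M⁻¹ i j := by
  have hcard : 0 < Fintype.card ι := Fintype.card_pos_iff.mpr ⟨i⟩
  have hMdet := hM.det_pos hMinv
  have hNdet := hN.det_pos hNinv
  have hadj := hN.adjugate_le_pow_mul_adjugate hNM i j
  rw [inv_def, inv_def, Matrix.smul_apply, Matrix.smul_apply, Ring.inverse_eq_inv',
    smul_eq_mul, smul_eq_mul, inv_mul_eq_div, inv_mul_eq_div, ← mul_div_assoc,
    div_le_div_iff₀ hNdet hMdet]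
  calc N.adjugate i j * M.det
      ≤ (c ^ (Fintype.card ι - 1) * M.adjugate i j) * (c ^ Fintype.card ι * N.det) :=
        mul_le_mul hadj (hM.det_le_pow_mul_det hMN) hMdet.le ((hN.adjugate_nonneg i j).trans hadj)
    _ = c ^ (2 * Fintype.card ι - 1) * M.adjugate i j * N.det := by
        rw [show 2 * Fintype.card ι - 1 = Fintype.card ι - 1 + Fintype.card ι by omega, pow_add]
        ring

end IsWeakRDDL

theorem eApprox_iff {ε a b : ℝ} :
    EApprox ε a b ↔ a ≤ Real.exp ε * b ∧ b ≤ Real.exp ε * a := by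
  rw [EApprox, Real.exp_neg, inv_mul_le_iff₀ (Real.exp_pos ε)]

theorem EApprox.mono {ε δ a b : ℝ} (h : EApprox ε a b) (hεδ : ε ≤ δ) (ha : 0 ≤ a) :
    EApprox δ a b :=
  ⟨le_trans (by gcongr) h.1, h.2.trans (by gcongr)⟩

theorem approx_invert_general {ι : Type*} [Fintype ι] [DecidableEq ι] {ε : ℝ}
    {M N : Matrix ι ι ℝ} (hM : IsWeakRDDL M) (hN : IsWeakRDDL N)
    (hMinv : IsUnit M) (hNinv : IsUnit N)
    (hoff : ∀ i j, i ≠ j → EApprox ε (-M i j) (-N i j))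
    (hrow : ∀ i, EApprox ε (∑ j, M i j) (∑ j, N i j)) (i j : ι) :
    EApprox (ε * (2 * Fintype.card ι - 1)) (M⁻¹ i j) (N⁻¹ i j) := by
  simp only [eApprox_iff] at hoff hrow
  have hNM : IsWeakRDDL (Real.exp ε • M - N) :=
    .smul_sub_of_le (fun i j hij => (hoff i j hij).2) fun i => (hrow i).2
  have hMN : IsWeakRDDL (Real.exp ε • N - M) :=
    .smul_sub_of_le (fun i j hij => (hoff i j hij).1) fun i => (hrow i).1
  have hcard : 1 ≤ 2 * Fintype.card ι := by
    have := Fintype.card_pos_iff.mpr ⟨i⟩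
    omega
  have hexp : Real.exp (ε * (2 * Fintype.card ι - 1)) =
      Real.exp ε ^ (2 * Fintype.card ι - 1) := by
    rw [← Real.exp_nat_mul, mul_comm]
    push_cast [hcard]
    rfl
  rw [eApprox_iff, hexp]
  exact ⟨hN.inv_le_pow_mul_inv hM hNinv hMinv hMN hNM i j,
    hM.inv_le_pow_mul_inv hN hMinv hNinv hNM hMN i j⟩

/-- If two invertible RDDL matrices entrywise `e^ε`-approximate each other in magnitude
and their row sums `e^ε`-approximate each other, then their inverses entrywise
`e^{2εn}`-approximate each other. -/
theorem approx_invert {n : ℕ} (ε : ℝ) (hε : 0 ≤ ε)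
    (M N : Matrix (Fin n) (Fin n) ℝ)
    (hM : IsRDDL M) (hN : IsRDDL N) (hMinv : IsUnit M) (hNinv : IsUnit N)
    (hdiag : ∀ i, EApprox ε (M i i) (N i i))
    (hoff : ∀ i j, i ≠ j → EApprox ε (-(M i j)) (-(N i j)))
    (hrow : ∀ i, EApprox ε (∑ j, M i j) (∑ j, N i j)) :
    ∀ i j, EApprox (2 * ε * n) (M⁻¹ i j) (N⁻¹ i j) := by
  intro i j
  refine (approx_invert_general hM.isWeakRDDL hN.isWeakRDDL hMinv hNinv hoff hrow i j).mono ?_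
    (hM.isWeakRDDL.inv_nonneg i j)
  rw [Fintype.card_fin]
  linarith
end
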